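/- arXiv:2402.12333 — 7 statements merged into one kernel-verified Lean document; each statement's English description precedes it below -/
import Mathlib

section
/- Let k ≥ 2 be an integer. Then for all positive integers n and all real ε with 0 < ε ≤ (k−1)/6, one has τ_k(n) ≤ min( k^{Ω(n)}, (3(k−1)/(5ε))^{k^{1/ε}(k−1)} · n^ε ). -/
/-- The `k`-fold Piltz divisor function: `piltz k n` is the number of ordered
`k`-tuples of positive integers whose product is `n` (Dirichlet `k`-th power of ζ). -/
def piltz (k n : ℕ) : ℕ := ((ArithmeticFunction.zeta : ArithmeticFunction ℕ) ^ k) n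

/-!
Since `τ_k` is multiplicative, it suffices to bound `τ_k(p ^ a)` by `k ^ a` and by a multiple of
`p ^ (a * ε)`. If `p > k ^ (1 / ε)`, then `τ_k(p ^ a) ≤ k ^ a ≤ p ^ (a * ε)`. There are at most
`k ^ (1 / ε)` other primes, and each of them loses at most the factor `(3(k - 1) / (5ε)) ^ (k - 1)`:
indeed `τ_k(p ^ a) ≤ (1 + a) ^ (k - 1)`, and with `s = ε / (k - 1) ≤ 1 / 6` the inequality
`e * u ≤ exp u` at `u = s * (1 + a) * log 2` gives `1 + a ≤ 3 / (5 * s) * 2 ^ (a * s)`.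
-/

section Multiplicative

open ArithmeticFunction

theorem le_pow_cardFactors_of_isMultiplicative {R : Type*} [CommSemiring R] [PartialOrder R]
    [IsOrderedRing R] {f : ArithmeticFunction R} (hf : f.IsMultiplicative) (hf₀ : ∀ n, 0 ≤ f n)
    {c : R} (hfc : ∀ p a : ℕ, p.Prime → f (p ^ a) ≤ c ^ a) {n : ℕ} (hn : n ≠ 0) :
    f n ≤ c ^ cardFactors n := by
  rw [hf.multiplicative_factorization f hn, cardFactors_eq_sum_factorization]
  calc n.factorization.prod (fun p a ↦ f (p ^ a))
      ≤ ∏ p ∈ n.primeFactors, c ^ n.factorization p :=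
        Finset.prod_le_prod (fun _ _ ↦ hf₀ _) fun p hp ↦
          hfc p _ (Nat.prime_of_mem_primeFactors hp)
    _ = c ^ n.factorization.sum fun _ a ↦ a := Finset.prod_pow_eq_pow_sum _ _ _

theorem card_filter_primeFactors_le (n : ℕ) {K : ℝ} (hK : 0 ≤ K) :
    ((n.primeFactors.filter fun p : ℕ ↦ (p : ℝ) ≤ K).card : ℝ) ≤ K := by
  have hsub : n.primeFactors.filter (fun p : ℕ ↦ (p : ℝ) ≤ K) ⊆ Finset.Icc 1 ⌊K⌋₊ := fun p hp ↦ by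
    obtain ⟨hpn, hpK⟩ := Finset.mem_filter.1 hp
    exact Finset.mem_Icc.2 ⟨(Nat.prime_of_mem_primeFactors hpn).one_le, Nat.le_floor hpK⟩
  have hcard := Finset.card_le_card hsub
  rw [Nat.card_Icc, Nat.add_sub_cancel] at hcard
  exact (Nat.le_floor_iff hK).1 hcard

theorem prod_primeFactors_pow_factorization_rpow {n : ℕ} (hn : n ≠ 0) (ε : ℝ) :
    ∏ p ∈ n.primeFactors, ((p : ℝ) ^ n.factorization p) ^ ε = (n : ℝ) ^ ε := by
  rw [Real.finsetProd_rpow _ _ fun _ _ ↦ by positivity]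
  congr 1
  exact_mod_cast Nat.prod_factorization_pow_eq_self hn

theorem le_rpow_mul_rpow_of_isMultiplicative {f : ArithmeticFunction ℝ}
    (hf : f.IsMultiplicative) (hf₀ : ∀ n, 0 ≤ f n) {C K ε : ℝ} (hC : 1 ≤ C) (hK : 0 ≤ K)
    (hsmall : ∀ p a : ℕ, p.Prime → (p : ℝ) ≤ K → f (p ^ a) ≤ C * ((p : ℝ) ^ a) ^ ε)
    (hlarge : ∀ p a : ℕ, p.Prime → K < p → f (p ^ a) ≤ ((p : ℝ) ^ a) ^ ε)
    {n : ℕ} (hn : n ≠ 0) :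
    f n ≤ C ^ K * (n : ℝ) ^ ε := by
  calc f n = ∏ p ∈ n.primeFactors, f (p ^ n.factorization p) :=
        hf.multiplicative_factorization f hn
    _ ≤ ∏ p ∈ n.primeFactors,
          ((if (p : ℝ) ≤ K then C else 1) * ((p : ℝ) ^ n.factorization p) ^ ε) := by
        refine Finset.prod_le_prod (fun _ _ ↦ hf₀ _) fun p hp ↦ ?_
        have hp' := Nat.prime_of_mem_primeFactors hp
        split_ifs with hpK
        · exact hsmall p _ hp' hpK
        · simpa only [one_mul] using hlarge p _ hp' (not_le.1 hpK)
    _ = C ^ ((n.primeFactors.filter fun p : ℕ ↦ (p : ℝ) ≤ K).card : ℝ) * (n : ℝ) ^ ε := by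
        rw [Finset.prod_mul_distrib, prod_primeFactors_pow_factorization_rpow hn,
          ← Finset.prod_filter, Finset.prod_const, Real.rpow_natCast]
    _ ≤ C ^ K * (n : ℝ) ^ ε := by
        gcongr
        exact card_filter_primeFactors_le n hK

end Multiplicative

section RealInequalities

open Real

theorem exp_one_mul_log_mul_le_rpow {b : ℝ} (hb : 0 < b) (x : ℝ) :
    exp 1 * (log b * x) ≤ b ^ x := by
  rw [rpow_def_of_pos hb]
  exact exp_one_mul_le_exp

-- The constant `3 / 5` rounds up `2 ^ (1 / 6) / (e * log 2) = 0.5957…`.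
theorem two_rpow_le_three_fifths_mul {s : ℝ} (hs : s ≤ 1 / 6) :
    (2 : ℝ) ^ s ≤ 3 / 5 * (exp 1 * log 2) := by
  have hpow : (2 : ℝ) ^ s ≤ 1.123 := by
    calc (2 : ℝ) ^ s ≤ 2 ^ (6 : ℝ)⁻¹ :=
          rpow_le_rpow_of_exponent_le one_le_two (by rwa [← one_div])
      _ ≤ 1.123 := by
          rw [rpow_inv_le_iff_of_pos (by norm_num) (by norm_num) (by norm_num)]
          norm_num
  have hconst : (2.718 * 0.693 : ℝ) ≤ exp 1 * log 2 := by
    gcongr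
    · exact le_trans (by norm_num) exp_one_gt_d9.le
    · exact le_trans (by norm_num) log_two_gt_d9.le
  linarith

theorem one_add_le_mul_two_rpow {s : ℝ} (hs : 0 < s) (hs' : s ≤ 1 / 6) (x : ℝ) :
    1 + x ≤ 3 / (5 * s) * 2 ^ (x * s) := by
  have hc : 0 < exp 1 * log 2 := mul_pos (exp_pos 1) (log_pos one_lt_two)
  have htangent : s * (1 + x) ≤ 3 / 5 * 2 ^ (x * s) := by
    refine le_of_mul_le_mul_left ?_ hc
    calc exp 1 * log 2 * (s * (1 + x)) = exp 1 * (log 2 * (s + x * s)) := by ring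
      _ ≤ 2 ^ (s + x * s) := exp_one_mul_log_mul_le_rpow two_pos _
      _ = 2 ^ s * 2 ^ (x * s) := rpow_add two_pos _ _
      _ ≤ 3 / 5 * (exp 1 * log 2) * 2 ^ (x * s) := by
          gcongr
          exact two_rpow_le_three_fifths_mul hs'
      _ = exp 1 * log 2 * (3 / 5 * 2 ^ (x * s)) := by ring
  calc 1 + x = s * (1 + x) / s := by field_simp
    _ ≤ 3 / 5 * 2 ^ (x * s) / s := div_le_div_of_nonneg_right htangent hs.le
    _ = 3 / (5 * s) * 2 ^ (x * s) := by field_simp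

theorem one_add_rpow_le_mul_rpow {b x m ε : ℝ} (hb : 2 ≤ b) (hx : 0 ≤ x) (hε : 0 < ε)
    (hεm : ε ≤ m / 6) : (1 + x) ^ m ≤ (3 * m / (5 * ε)) ^ m * (b ^ x) ^ ε := by
  have hm : 0 < m := by linarith
  have hs : ε / m ≤ 1 / 6 := by
    rw [div_le_iff₀ hm]
    linarith
  calc (1 + x) ^ m ≤ (3 / (5 * (ε / m)) * 2 ^ (x * (ε / m))) ^ m := by
        gcongr
        exact one_add_le_mul_two_rpow (div_pos hε hm) hs x
    _ = (3 * m / (5 * ε)) ^ m * (2 ^ x) ^ ε := by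
        rw [mul_rpow (by positivity) (by positivity), ← rpow_mul two_pos.le,
          ← rpow_mul two_pos.le]
        field_simp
    _ ≤ (3 * m / (5 * ε)) ^ m * (b ^ x) ^ ε := by gcongr

end RealInequalities

section Piltz

variable {p : ℕ}

theorem piltz_succ_prime_pow (k : ℕ) (hp : p.Prime) (a : ℕ) :
    piltz (k + 1) (p ^ a) = ∑ i ∈ Finset.range (a + 1), piltz k (p ^ i) := by
  rw [piltz, pow_succ, ArithmeticFunction.mul_zeta_apply, Nat.sum_divisors_prime_pow hp]
  rfl

theorem piltz_prime_pow_le_pow (k : ℕ) (hp : p.Prime) (a : ℕ) : piltz k (p ^ a) ≤ k ^ a := by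
  induction k generalizing a with
  | zero => cases a <;> simp [piltz, hp.ne_one]
  | succ k ih =>
    calc piltz (k + 1) (p ^ a) = ∑ i ∈ Finset.range (a + 1), piltz k (p ^ i) :=
          piltz_succ_prime_pow k hp a
      _ ≤ ∑ i ∈ Finset.range (a + 1), k ^ i * a.choose i :=
          Finset.sum_le_sum fun i hi ↦ (ih i).trans <|
            Nat.le_mul_of_pos_right _ (Nat.choose_pos (Finset.mem_range_succ_iff.1 hi))
      _ = (k + 1) ^ a := by simp only [add_pow, one_pow, mul_one, Nat.cast_id]

theorem piltz_succ_prime_pow_le_pow (k : ℕ) (hp : p.Prime) (a : ℕ) :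
    piltz (k + 1) (p ^ a) ≤ (1 + a) ^ k := by
  induction k generalizing a with
  | zero => simp [piltz, hp.ne_zero]
  | succ k ih =>
    calc piltz (k + 2) (p ^ a) = ∑ i ∈ Finset.range (a + 1), piltz (k + 1) (p ^ i) :=
          piltz_succ_prime_pow (k + 1) hp a
      _ ≤ ∑ _i ∈ Finset.range (a + 1), (1 + a) ^ k :=
          Finset.sum_le_sum fun i hi ↦ (ih i).trans <| by
            gcongr
            exact Finset.mem_range_succ_iff.1 hi
      _ = (1 + a) ^ (k + 1) := by
          rw [Finset.sum_const, Finset.card_range, smul_eq_mul, add_comm a, pow_succ']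

theorem piltz_prime_pow_le_rpow {k : ℕ} {ε : ℝ} (hε : 0 < ε) (hp : p.Prime)
    (hkp : (k : ℝ) ^ (1 / ε) ≤ p) (a : ℕ) : (piltz k (p ^ a) : ℝ) ≤ ((p : ℝ) ^ a) ^ ε := by
  have hk : (k : ℝ) ≤ (p : ℝ) ^ ε := by
    rwa [one_div, Real.rpow_inv_le_iff_of_pos k.cast_nonneg p.cast_nonneg hε] at hkp
  calc (piltz k (p ^ a) : ℝ) ≤ (k : ℝ) ^ a := by exact_mod_cast piltz_prime_pow_le_pow k hp a
    _ ≤ ((p : ℝ) ^ ε) ^ a := by gcongr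
    _ = ((p : ℝ) ^ a) ^ ε := Real.rpow_pow_comm p.cast_nonneg ε a

theorem piltz_prime_pow_le_mul_rpow {k : ℕ} {ε : ℝ} (hε : 0 < ε)
    (hεk : ε ≤ ((k : ℝ) - 1) / 6) (hp : p.Prime) (a : ℕ) :
    (piltz k (p ^ a) : ℝ) ≤
      (3 * ((k : ℝ) - 1) / (5 * ε)) ^ ((k : ℝ) - 1) * ((p : ℝ) ^ a) ^ ε := by
  have hk : 1 < k := by exact_mod_cast (by linarith : (1 : ℝ) < k)
  calc (piltz k (p ^ a) : ℝ) ≤ (1 + a : ℝ) ^ (k - 1) := by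
        have hle := piltz_succ_prime_pow_le_pow (k - 1) hp a
        rw [Nat.sub_add_cancel hk.le] at hle
        exact_mod_cast hle
    _ = (1 + a : ℝ) ^ ((k : ℝ) - 1) := by
        rw [← Real.rpow_natCast, Nat.cast_sub hk.le, Nat.cast_one]
    _ ≤ (3 * ((k : ℝ) - 1) / (5 * ε)) ^ ((k : ℝ) - 1) * ((p : ℝ) ^ (a : ℝ)) ^ ε :=
        one_add_rpow_le_mul_rpow (by exact_mod_cast hp.two_le) a.cast_nonneg hε hεk
    _ = (3 * ((k : ℝ) - 1) / (5 * ε)) ^ ((k : ℝ) - 1) * ((p : ℝ) ^ a) ^ ε := by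
        rw [Real.rpow_natCast]

theorem piltz_le_pow_cardFactors (k : ℕ) {n : ℕ} (hn : n ≠ 0) :
    piltz k n ≤ k ^ ArithmeticFunction.cardFactors n :=
  le_pow_cardFactors_of_isMultiplicative ArithmeticFunction.isMultiplicative_zeta.pow
    (fun _ ↦ Nat.zero_le _) (fun _ a hp ↦ piltz_prime_pow_le_pow k hp a) hn

theorem piltz_le_rpow_mul_rpow {k n : ℕ} (hn : n ≠ 0) {ε : ℝ} (hε : 0 < ε)
    (hεk : ε ≤ ((k : ℝ) - 1) / 6) :
    (piltz k n : ℝ) ≤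
      (3 * ((k : ℝ) - 1) / (5 * ε)) ^ ((k : ℝ) ^ (1 / ε) * ((k : ℝ) - 1)) * (n : ℝ) ^ ε := by
  have hbase : 1 ≤ 3 * ((k : ℝ) - 1) / (5 * ε) := by
    rw [le_div_iff₀ (by positivity)]
    linarith
  rw [mul_comm ((k : ℝ) ^ (1 / ε)), Real.rpow_mul (by linarith)]
  exact le_rpow_mul_rpow_of_isMultiplicative
    (ArithmeticFunction.isMultiplicative_zeta.pow (k := k)).natCast
    (fun _ ↦ Nat.cast_nonneg _)
    (Real.one_le_rpow hbase (by linarith)) (by positivity)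
    (fun _ a hp _ ↦ piltz_prime_pow_le_mul_rpow hε hεk hp a)
    (fun _ a hp hkp ↦ piltz_prime_pow_le_rpow hε hp hkp.le a) hn

end Piltz

theorem statement_7 (k : ℕ) (hk : 2 ≤ k) (n : ℕ) (hn : 0 < n) (ε : ℝ)
    (hε : 0 < ε) (hε' : ε ≤ ((k : ℝ) - 1) / 6) :
    (piltz k n : ℝ) ≤
      min ((k : ℝ) ^ n.primeFactorsList.length)
        ((3 * ((k : ℝ) - 1) / (5 * ε)) ^ ((k : ℝ) ^ (1 / ε) * ((k : ℝ) - 1)) * (n : ℝ) ^ ε) :=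
  le_min (by exact_mod_cast piltz_le_pow_cardFactors k hn.ne')
    (piltz_le_rpow_mul_rpow hn.ne' hε hε')
end

section
/- For all positive integers N, one has ∏_{n=1}^N n! ≤ N^{(N+1)²/2} · e^{−3(N²−1)/4}. -/
/-!
Take logarithms and induct on `N`. Since the Stirling sequence `n! / (√(2n) (n/e)ⁿ)` decreases from
its value `e / √2` at `n = 1`, the new term `log (N + 1)!` is at most `(N + 3/2) log (N + 1) - N`.
The claimed bound grows by at least this much exactly when
`N + 3/2 ≤ (N + 1)² (log (N + 1) - log N)`. That holds because the midpoint rule underestimates the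
integral of the convex function `1 / t` over `[N, N + 1]`, so `log (N + 1) - log N ≥ 1 / (N + 1/2)`,
and `(N + 1/2) (N + 3/2) ≤ (N + 1)²`.
-/

open Real
open scoped Nat

theorem log_factorial_le_stirling {n : ℕ} (hn : n ≠ 0) :
    log n ! ≤ n * log n - n + log n / 2 + 1 := by
  have hmono : log (Stirling.stirlingSeq n) ≤ log (Stirling.stirlingSeq 1) := by
    obtain ⟨m, rfl⟩ := Nat.exists_eq_succ_of_ne_zero hn
    exact Stirling.log_stirlingSeq'_antitone m.zero_le
  have hn' : (n : ℝ) ≠ 0 := Nat.cast_ne_zero.2 hn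
  rw [Stirling.log_stirlingSeq_formula, Stirling.log_stirlingSeq_formula,
    log_mul two_ne_zero hn', log_div hn' (exp_ne_zero 1)] at hmono
  simp only [Nat.factorial_one, Nat.cast_one, log_one, mul_one, one_div, log_inv, log_exp]
    at hmono
  linarith

theorem inv_add_half_le_log_add_one_sub_log {x : ℝ} (hx : 0 < x) :
    (x + 1 / 2)⁻¹ ≤ log (x + 1) - log x :=
  calc (x + 1 / 2)⁻¹ = 2 * x⁻¹ / (x⁻¹ + 2) := by field_simp; ring
    _ ≤ log (1 + x⁻¹) := le_log_one_add_of_nonneg (by positivity)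
    _ = log (x + 1) - log x := by
      rw [← log_div (by positivity) hx.ne']
      congr 1
      field_simp

theorem add_three_halves_le_sq_mul_log_add_one_sub_log {x : ℝ} (hx : 0 < x) :
    x + 3 / 2 ≤ (x + 1) ^ 2 * (log (x + 1) - log x) :=
  calc x + 3 / 2 ≤ (x + 1) ^ 2 * (x + 1 / 2)⁻¹ := by
        rw [← div_eq_mul_inv, le_div_iff₀ (by positivity)]
        linarith
    _ ≤ (x + 1) ^ 2 * (log (x + 1) - log x) := by
        gcongr
        exact inv_add_half_le_log_add_one_sub_log hx

theorem superFactorial_pos (n : ℕ) : 0 < n.superFactorial := by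
  rw [← Nat.prod_Icc_factorial]
  exact Finset.prod_pos fun k _ => k.factorial_pos

theorem log_superFactorial_le {n : ℕ} (hn : 1 ≤ n) :
    log n.superFactorial ≤ log n * (((n : ℝ) + 1) ^ 2 / 2) - 3 * ((n : ℝ) ^ 2 - 1) / 4 := by
  induction n, hn using Nat.le_induction with
  | base => simp
  | succ n hn ih =>
    have hfactorial := log_factorial_le_stirling n.succ_ne_zero
    have hgap := add_three_halves_le_sq_mul_log_add_one_sub_log (x := n) (by positivity)
    have hsplit : log (n + 1).superFactorial = log (n + 1)! + log n.superFactorial := by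
      rw [Nat.superFactorial_succ, Nat.cast_mul, log_mul (by positivity)
        (Nat.cast_ne_zero.2 (superFactorial_pos n).ne')]
    rw [hsplit]
    push_cast at hfactorial ⊢
    linarith

theorem statement_8 (N : ℕ) (hN : 0 < N) :
    (↑(∏ n ∈ Finset.Icc 1 N, Nat.factorial n) : ℝ) ≤
      (N : ℝ) ^ (((N : ℝ) + 1) ^ 2 / 2) * Real.exp (-(3 * ((N : ℝ) ^ 2 - 1) / 4)) := by
  rw [Nat.prod_Icc_factorial, rpow_def_of_pos (Nat.cast_pos.2 hN), ← exp_add, ← sub_eq_add_neg,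
    ← log_le_iff_le_exp (Nat.cast_pos.2 (superFactorial_pos N))]
  exact log_superFactorial_le hN
end

section
/- Uniformly for all real α ≥ 3 and all real x > 1, one has ∑_{p ≤ x, p prime} 1/(log p)^α < (2α)^α · x/(log x)^{α+1}. -/
/-!
Split the primes at `y = x ^ (1 / 3)`: those up to `y` number at most `y` and contribute at most
`1 / (log 2) ^ α` each, while the remaining ones number at most `π(x)` and contribute at most
`(3 / log x) ^ α` each. Each part is at most half of the claimed bound: the first because
`(log x) ^ s ≤ (s / (c e)) ^ s * x ^ c`, here with `s = α + 1` and `c = 2 / 3`, the second because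
`π(x) log x < 4 x` and `8 * 3 ^ α ≤ (2 α) ^ α`. The last inequality is an equality at `α = 3`.
-/

open Real Finset

lemma sum_le_card_nsmul_add_card_nsmul_of_antitoneOn {ι β M : Type*} [LinearOrder β]
    [AddCommMonoid M] [PartialOrder M] [IsOrderedAddMonoid M] {f : β → M} {S : Set β}
    (hf : AntitoneOn f S) {s : Finset ι} {g : ι → β} {m y : β} (hm : m ∈ S) (hy : y ∈ S)
    (hgS : ∀ i ∈ s, g i ∈ S) (hmg : ∀ i ∈ s, m ≤ g i) :
    ∑ i ∈ s, f (g i) ≤ #{i ∈ s | g i ≤ y} • f m + #{i ∈ s | ¬g i ≤ y} • f y := by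
  rw [← sum_filter_add_sum_filter_not s (fun i ↦ g i ≤ y)]
  refine add_le_add (sum_le_card_nsmul _ _ _ fun i hi ↦ ?_) (sum_le_card_nsmul _ _ _ fun i hi ↦ ?_)
  · have his := (mem_filter.1 hi).1
    exact hf hm (hgS i his) (hmg i his)
  · obtain ⟨his, hyi⟩ := mem_filter.1 hi
    exact hf hy (hgS i his) (not_le.1 hyi).le

lemma card_filter_primesLE_le (n : ℕ) {y : ℝ} (hy : 0 ≤ y) :
    (#{p ∈ Nat.primesLE n | ((p : ℕ) : ℝ) ≤ y} : ℝ) ≤ y := by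
  have hsub : {p ∈ Nat.primesLE n | ((p : ℕ) : ℝ) ≤ y} ⊆ Icc 1 ⌊y⌋₊ := fun p hp ↦ by
    obtain ⟨hpn, hpy⟩ := mem_filter.1 hp
    exact mem_Icc.2 ⟨(Nat.one_lt_of_mem_primesLE hpn).le, Nat.le_floor hpy⟩
  have hcard : #{p ∈ Nat.primesLE n | ((p : ℕ) : ℝ) ≤ y} ≤ ⌊y⌋₊ := by
    simpa only [Nat.card_Icc, Nat.add_sub_cancel] using card_le_card hsub
  exact (Nat.cast_le.2 hcard).trans (Nat.floor_le hy)

lemma sum_primesLE_le_of_antitoneOn {f : ℝ → ℝ} (hf : AntitoneOn f (Set.Ioi 1))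
    (hf0 : ∀ t, 1 < t → 0 ≤ f t) (n : ℕ) {y : ℝ} (hy : 1 < y) :
    ∑ p ∈ Nat.primesLE n, f p ≤ y * f 2 + n.primeCounting * f y := by
  have htwo : ∀ p ∈ Nat.primesLE n, (2 : ℝ) ≤ p := fun p hp ↦ by
    exact_mod_cast Nat.two_le_of_mem_primesLE hp
  have hlarge : #{p ∈ Nat.primesLE n | ¬((p : ℕ) : ℝ) ≤ y} ≤ n.primeCounting :=
    (card_filter_le _ _).trans_eq (Nat.primesLE_card_eq_primeCounting n)
  have hf2 := hf0 2 one_lt_two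
  have hfy := hf0 y hy
  calc ∑ p ∈ Nat.primesLE n, f p
      ≤ #{p ∈ Nat.primesLE n | ((p : ℕ) : ℝ) ≤ y} * f 2
        + #{p ∈ Nat.primesLE n | ¬((p : ℕ) : ℝ) ≤ y} * f y := by
        simpa only [nsmul_eq_mul] using sum_le_card_nsmul_add_card_nsmul_of_antitoneOn hf
          (Set.mem_Ioi.2 one_lt_two) (Set.mem_Ioi.2 hy)
          (fun p hp ↦ one_lt_two.trans_le (htwo p hp)) htwo
    _ ≤ y * f 2 + n.primeCounting * f y := by
        gcongr
        exact card_filter_primesLE_le n (by linarith)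

lemma antitoneOn_one_div_log_rpow {a : ℝ} (ha : 0 ≤ a) :
    AntitoneOn (fun t : ℝ ↦ 1 / log t ^ a) (Set.Ioi 1) := fun t ht u _ htu ↦ by
  have ht0 : 0 < t := one_pos.trans ht
  have hlog : 0 < log t := log_pos ht
  dsimp only
  gcongr

lemma log_le_rpow_div_mul_exp_one {x ε : ℝ} (hx : 0 < x) (hε : 0 < ε) :
    log x ≤ x ^ ε / (ε * exp 1) := by
  rw [le_div_iff₀ (by positivity)]
  calc log x * (ε * exp 1) = exp 1 * (log x * ε) := by ring
    _ ≤ exp (log x * ε) := exp_one_mul_le_exp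
    _ = x ^ ε := (rpow_def_of_pos hx ε).symm

lemma log_rpow_le_mul_rpow {x s c : ℝ} (hx : 1 ≤ x) (hs : 0 < s) (hc : 0 < c) :
    log x ^ s ≤ (s / (c * exp 1)) ^ s * x ^ c := by
  have hx0 : 0 < x := one_pos.trans_le hx
  calc log x ^ s ≤ (x ^ (c / s) / (c / s * exp 1)) ^ s :=
        rpow_le_rpow (log_nonneg hx) (log_le_rpow_div_mul_exp_one hx0 (div_pos hc hs)) hs.le
    _ = (s / (c * exp 1) * x ^ (c / s)) ^ s := by
        congr 1
        field_simp
    _ = (s / (c * exp 1)) ^ s * x ^ c := by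
        rw [mul_rpow (by positivity) (by positivity), ← rpow_mul hx0.le, div_mul_cancel₀ _ hs.ne']

lemma sqrt_mul_log_le_self {x : ℝ} (hx : 0 < x) : √x * log x ≤ x := by
  have hlog : log x ≤ √x :=
    calc log x ≤ √x / (1 / 2 * exp 1) := by
          simpa only [sqrt_eq_rpow] using log_le_rpow_div_mul_exp_one hx one_half_pos
      _ ≤ √x := div_le_self (sqrt_nonneg x) (by linarith [exp_one_gt_two])
  calc √x * log x ≤ √x * √x := by gcongr
    _ = x := mul_self_sqrt hx.le

lemma primeCounting_mul_log_lt {x : ℝ} (hx : 1 < x) :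
    (Nat.primeCounting ⌊x⌋₊ : ℝ) * log x < 4 * x := by
  have hx0 : 0 < x := one_pos.trans hx
  have hlog : 0 < log x := log_pos hx
  have hpi : (Nat.primeCounting ⌊x⌋₊ : ℝ) ≤ log 4 * x / (log x / 2) + √x := by
    simpa only [log_sqrt hx0.le] using Chebyshev.pi_le_log4_mul_div hx
  have hlog4 : 2 * log 4 + 1 < 4 := by linarith [log_four_eq, log_two_lt_d9]
  calc (Nat.primeCounting ⌊x⌋₊ : ℝ) * log x
      ≤ (log 4 * x / (log x / 2) + √x) * log x := by gcongr
    _ = 2 * log 4 * x + √x * log x := by field_simp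
    _ ≤ 2 * log 4 * x + x := by gcongr; exact sqrt_mul_log_le_self hx0
    _ = (2 * log 4 + 1) * x := by ring
    _ < 4 * x := by gcongr

lemma add_one_rpow_le_exp_one_mul_rpow {a : ℝ} (ha : 0 < a) :
    (a + 1) ^ a ≤ exp 1 * a ^ a := by
  have hbase : a + 1 ≤ exp (1 / a) * a :=
    calc a + 1 = (1 / a + 1) * a := by field_simp; ring
      _ ≤ exp (1 / a) * a := by gcongr; exact add_one_le_exp _
  calc (a + 1) ^ a ≤ (exp (1 / a) * a) ^ a := by gcongr
    _ = exp 1 * a ^ a := by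
        rw [mul_rpow (exp_pos _).le ha.le, ← exp_mul, one_div_mul_cancel ha.ne']

lemma add_one_div_rpow_add_one_le {a c : ℝ} (ha : 0 < a) (hc : 0 < c) :
    ((a + 1) / (c * exp 1)) ^ (a + 1) ≤ (a + 1) / c * (a / (c * exp 1)) ^ a := by
  have hce : 0 < c * exp 1 := by positivity
  calc ((a + 1) / (c * exp 1)) ^ (a + 1)
      = (a + 1) ^ a / (c * exp 1) ^ a * ((a + 1) / (c * exp 1)) := by
        rw [rpow_add_one (by positivity), div_rpow (by positivity) hce.le]
    _ ≤ exp 1 * a ^ a / (c * exp 1) ^ a * ((a + 1) / (c * exp 1)) := by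
        gcongr
        exact add_one_rpow_le_exp_one_mul_rpow ha
    _ = (a + 1) / c * (a / (c * exp 1)) ^ a := by
        rw [div_rpow ha.le hce.le]
        field_simp

-- The base is chosen just below `4 e log 2 / 3 ≈ 2.51`, the largest `b` for which
-- `b * (a / (2 / 3 * e)) ≤ 2 * a * log 2`, as needed in `two_mul_add_one_div_rpow_le`.
lemma three_mul_add_one_le_rpow {a : ℝ} (ha : 3 ≤ a) : 3 * (a + 1) ≤ (5 / 2 : ℝ) ^ a := by
  have hbernoulli : 1 + a / 3 * (3 / 2) ≤ (5 / 2 : ℝ) ^ (a / 3) := by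
    convert one_add_mul_self_le_rpow_one_add (s := 3 / 2) (by norm_num) (p := a / 3) (by linarith)
      using 2
    norm_num
  calc 3 * (a + 1) ≤ (1 + a / 3 * (3 / 2)) ^ 3 := by
        nlinarith [mul_nonneg (sub_nonneg.2 ha) (sub_nonneg.2 ha), pow_nonneg (sub_nonneg.2 ha) 3]
    _ ≤ ((5 / 2 : ℝ) ^ (a / 3)) ^ 3 := by gcongr
    _ = (5 / 2 : ℝ) ^ a := by
        rw [← rpow_mul_natCast (by norm_num), Nat.cast_ofNat, div_mul_cancel₀ a three_ne_zero]

lemma two_mul_add_one_div_rpow_le {a : ℝ} (ha : 3 ≤ a) :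
    2 * ((a + 1) / (2 / 3 * exp 1)) ^ (a + 1) ≤ (2 * a) ^ a * log 2 ^ a := by
  have ha0 : 0 < a := by linarith
  have hlog2 : 0 < log 2 := log_pos one_lt_two
  have hexp_log : 15 / 8 ≤ exp 1 * log 2 := by nlinarith [exp_one_gt_d9, log_two_gt_d9]
  have hbase : 5 / 2 * (a / (2 / 3 * exp 1)) ≤ 2 * a * log 2 :=
    calc 5 / 2 * (a / (2 / 3 * exp 1)) = 2 * a / exp 1 * (15 / 8) := by field_simp; ring
      _ ≤ 2 * a / exp 1 * (exp 1 * log 2) := by gcongr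
      _ = 2 * a * log 2 := by field_simp
  calc 2 * ((a + 1) / (2 / 3 * exp 1)) ^ (a + 1)
      ≤ 2 * ((a + 1) / (2 / 3) * (a / (2 / 3 * exp 1)) ^ a) := by
        gcongr
        exact add_one_div_rpow_add_one_le ha0 (by norm_num)
    _ = 3 * (a + 1) * (a / (2 / 3 * exp 1)) ^ a := by ring
    _ ≤ (5 / 2) ^ a * (a / (2 / 3 * exp 1)) ^ a := by
        gcongr
        exact three_mul_add_one_le_rpow ha
    _ = (5 / 2 * (a / (2 / 3 * exp 1))) ^ a := (mul_rpow (by norm_num) (by positivity)).symm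
    _ ≤ (2 * a * log 2) ^ a := by gcongr
    _ = (2 * a) ^ a * log 2 ^ a := mul_rpow (by positivity) hlog2.le

lemma eight_mul_three_rpow_le {a : ℝ} (ha : 3 ≤ a) : 8 * (3 : ℝ) ^ a ≤ (2 * a) ^ a := by
  have htwo_rpow : (8 : ℝ) ≤ 2 ^ a :=
    calc (8 : ℝ) = 2 ^ (3 : ℝ) := by norm_num
      _ ≤ 2 ^ a := rpow_le_rpow_of_exponent_le one_le_two ha
  calc 8 * (3 : ℝ) ^ a ≤ 2 ^ a * a ^ a := by gcongr
    _ = (2 * a) ^ a := (mul_rpow two_pos.le (by linarith)).symm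

lemma rpow_one_third_mul_one_div_log_two_rpow_le {a x : ℝ} (ha : 3 ≤ a) (hx : 1 < x) :
    x ^ (1 / 3 : ℝ) * (1 / log 2 ^ a) ≤ (2 * a) ^ a * x / log x ^ (a + 1) / 2 := by
  have hx0 : 0 < x := one_pos.trans hx
  have hlog : 0 < log x := log_pos hx
  have hrpow : x ^ (1 / 3 : ℝ) * x ^ (2 / 3 : ℝ) = x := by
    rw [← rpow_add hx0]
    norm_num
  rw [div_div, mul_one_div, div_le_div_iff₀ (by positivity) (by positivity)]
  calc x ^ (1 / 3 : ℝ) * (log x ^ (a + 1) * 2)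
      ≤ x ^ (1 / 3 : ℝ) * (((a + 1) / (2 / 3 * exp 1)) ^ (a + 1) * x ^ (2 / 3 : ℝ) * 2) := by
        gcongr
        exact log_rpow_le_mul_rpow hx.le (by linarith) (by norm_num)
    _ = 2 * ((a + 1) / (2 / 3 * exp 1)) ^ (a + 1) * (x ^ (1 / 3 : ℝ) * x ^ (2 / 3 : ℝ)) := by ring
    _ ≤ (2 * a) ^ a * log 2 ^ a * x := by
        rw [hrpow]
        exact mul_le_mul_of_nonneg_right (two_mul_add_one_div_rpow_le ha) hx0.le
    _ = (2 * a) ^ a * x * log 2 ^ a := by ring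

lemma primeCounting_mul_one_div_log_rpow_one_third_lt {a x : ℝ} (ha : 3 ≤ a) (hx : 1 < x) :
    Nat.primeCounting ⌊x⌋₊ * (1 / log (x ^ (1 / 3 : ℝ)) ^ a) <
      (2 * a) ^ a * x / log x ^ (a + 1) / 2 := by
  have hx0 : 0 < x := one_pos.trans hx
  have hlog : 0 < log x := log_pos hx
  calc Nat.primeCounting ⌊x⌋₊ * (1 / log (x ^ (1 / 3 : ℝ)) ^ a)
      = 3 ^ a / log x ^ (a + 1) * (Nat.primeCounting ⌊x⌋₊ * log x) := by
        rw [log_rpow hx0, one_div_mul_eq_div, div_rpow hlog.le three_pos.le,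
          rpow_add_one hlog.ne']
        field_simp
    _ < 3 ^ a / log x ^ (a + 1) * (4 * x) :=
        mul_lt_mul_of_pos_left (primeCounting_mul_log_lt hx) (by positivity)
    _ = 8 * 3 ^ a * x / log x ^ (a + 1) / 2 := by ring
    _ ≤ (2 * a) ^ a * x / log x ^ (a + 1) / 2 := by
        gcongr
        exact eight_mul_three_rpow_le ha

theorem statement_9 (α x : ℝ) (hα : 3 ≤ α) (hx : 1 < x) :
    ∑ p ∈ (Finset.range (⌊x⌋₊ + 1)).filter Nat.Prime, 1 / Real.log p ^ α <
      (2 * α) ^ α * x / Real.log x ^ (α + 1) := by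
  have hnonneg : ∀ t : ℝ, 1 < t → 0 ≤ 1 / log t ^ α := fun t ht ↦
    one_div_nonneg.2 (rpow_nonneg (log_nonneg ht.le) α)
  rw [← Nat.primesLE_eq_filter_range]
  calc ∑ p ∈ Nat.primesLE ⌊x⌋₊, 1 / log p ^ α
      ≤ x ^ (1 / 3 : ℝ) * (1 / log 2 ^ α)
        + Nat.primeCounting ⌊x⌋₊ * (1 / log (x ^ (1 / 3 : ℝ)) ^ α) :=
        sum_primesLE_le_of_antitoneOn (antitoneOn_one_div_log_rpow (by linarith)) hnonneg _
          (one_lt_rpow hx (by norm_num))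
    _ < (2 * α) ^ α * x / log x ^ (α + 1) / 2 + (2 * α) ^ α * x / log x ^ (α + 1) / 2 :=
        add_lt_add_of_le_of_lt (rpow_one_third_mul_one_div_log_two_rpow_le hα hx)
          (primeCounting_mul_one_div_log_rpow_one_third_lt hα hx)
    _ = (2 * α) ^ α * x / log x ^ (α + 1) := add_halves _
end

section
/- Let x, y, z be real numbers with 2 ≤ y ≤ x and 2 ≤ z ≤ √y. Then the number of integers n with x − y < n ≤ x all of whose prime factors exceed z (i.e. P⁻(n) > z) is at most 2y/log z. -/
/-!
Selberg's sieve bounds the indicator of the integers free of small primes by the square of a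
divisor sum with real weights `λ`, `λ 1 = 1`, on squarefree moduli up to a level `N`. The
resulting quadratic form is diagonal in new coordinates; its minimum is `1 / S`, and the
minimizing weights satisfy `|λ| ≤ 1`. For an interval of length `y` each of the at most `N ^ 2`
pairs of moduli contributes an error at most `1`, which gives the bound `y / S + N ^ 2` with
`S = ∑ 1 / φ(k)` over the squarefree `k ≤ N`. Expanding `1 / φ(k)` into the reciprocals of the
integers with radical `k` shows `log (N + 1) ≤ S`. With `u = log z`, the level `N = ⌊z / u⌋`
gives `S ≥ u - log u ≥ (u + 1) / 2` and `N ^ 2 ≤ y / u ^ 2`, which suffices as soon as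
`u ≥ 3.6`; for smaller `z` the levels `1` and `2` do.
-/

open Finset

section Selberg

open ArithmeticFunction BoundingSieve
open scoped ArithmeticFunction.Moebius

lemma sum_moebius_filter_dvd {l m : ℕ} (hm : Squarefree m) (hlm : l ∣ m) :
    ∑ d ∈ m.divisors with l ∣ d, μ d = if m = l then μ l else 0 := by
  obtain ⟨e, rfl⟩ := hlm
  have hl0 : l ≠ 0 := left_ne_zero_of_mul hm.ne_zero
  have hle : l.Coprime e := Nat.coprime_of_squarefree_mul hm
  have himage : {d ∈ (l * e).divisors | l ∣ d} = e.divisors.image (l * ·) := by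
    ext d
    simp only [mem_filter, Nat.mem_divisors, mem_image]
    constructor
    · rintro ⟨⟨hd, -⟩, c, rfl⟩
      exact ⟨c, ⟨Nat.dvd_of_mul_dvd_mul_left (Nat.pos_of_ne_zero hl0) hd,
        right_ne_zero_of_mul hm.ne_zero⟩, rfl⟩
    · rintro ⟨c, ⟨hc, -⟩, rfl⟩
      exact ⟨⟨Nat.mul_dvd_mul_left l hc, hm.ne_zero⟩, dvd_mul_right l c⟩
  calc ∑ d ∈ (l * e).divisors with l ∣ d, μ d
      = ∑ c ∈ e.divisors, μ (l * c) := by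
        rw [himage, sum_image fun _ _ _ _ ↦ mul_left_cancel₀ hl0]
    _ = μ l * ∑ c ∈ e.divisors, μ c := by
        rw [mul_sum]
        exact sum_congr rfl fun c hc ↦ isMultiplicative_moebius.map_mul_of_coprime
          (hle.coprime_dvd_right (Nat.dvd_of_mem_divisors hc))
    _ = if l * e = l then μ l else 0 := by
        rw [← coe_mul_zeta_apply, moebius_mul_coe_zeta, one_apply]
        simp [hl0]

lemma gcd_div_left_of_squarefree {k d l : ℕ} (hk : Squarefree k) (hd : d ∣ k) (hl : l ∣ d) :
    Nat.gcd (k / l) d = d / l := by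
  obtain ⟨m, rfl⟩ := hd
  obtain ⟨n, rfl⟩ := hl
  have hl0 : 0 < l := Nat.pos_of_ne_zero
    (left_ne_zero_of_mul (left_ne_zero_of_mul hk.ne_zero))
  have hlm : m.Coprime l :=
    ((Nat.coprime_of_squarefree_mul hk).coprime_dvd_left (dvd_mul_right l n)).symm
  rw [mul_assoc, Nat.mul_div_cancel_left _ hl0, Nat.mul_div_cancel_left _ hl0, mul_comm l n,
    Nat.gcd_mul_left, hlm.gcd_eq_one, mul_one]

lemma lambdaSquared_eq_sum_filter_lcm {w : ℕ → ℝ} {T : Finset ℕ} (hw : ∀ d ∉ T, w d = 0)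
    {d : ℕ} (hd : d ≠ 0) :
    lambdaSquared w d = ∑ p ∈ T ×ˢ T with p.1.lcm p.2 = d, w p.1 * w p.2 := by
  rw [lambdaSquared, ← sum_product', ← sum_filter]
  refine sum_congr_of_eq_on_inter ?_ ?_ fun _ _ _ ↦ rfl
  · rintro ⟨a, b⟩ hab hT
    simp only [mem_filter, mem_product] at hab hT
    by_cases ha : a ∈ T
    · have hb : b ∉ T := fun hb ↦ hT ⟨⟨ha, hb⟩, hab.2.symm⟩
      rw [hw b hb, mul_zero]
    · rw [hw a ha, zero_mul]
  · rintro ⟨a, b⟩ hab hdiv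
    simp only [mem_filter, mem_product, Nat.mem_divisors] at hab hdiv
    exact absurd ⟨⟨⟨hab.2 ▸ Nat.dvd_lcm_left a b, hd⟩, hab.2 ▸ Nat.dvd_lcm_right a b, hd⟩,
      hab.2.symm⟩ hdiv

lemma errSum_lambdaSquared_le (s : BoundingSieve) {w : ℕ → ℝ} {T : Finset ℕ}
    (hT : T ⊆ s.prodPrimes.divisors) (hw : ∀ d ∉ T, w d = 0) :
    s.errSum (lambdaSquared w) ≤
      ∑ p ∈ T ×ˢ T, |w p.1| * |w p.2| * |s.rem (p.1.lcm p.2)| := by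
  have hlcm : ∀ p ∈ T ×ˢ T, p.1.lcm p.2 ∈ s.prodPrimes.divisors := fun p hp ↦ by
    rw [mem_product] at hp
    exact Nat.mem_divisors.2 ⟨Nat.lcm_dvd (Nat.dvd_of_mem_divisors (hT hp.1))
      (Nat.dvd_of_mem_divisors (hT hp.2)), prodPrimes_ne_zero⟩
  rw [← sum_fiberwise_of_maps_to hlcm, errSum]
  refine sum_le_sum fun d hd ↦ ?_
  rw [lambdaSquared_eq_sum_filter_lcm hw (Nat.pos_of_mem_divisors hd).ne']
  calc |∑ p ∈ T ×ˢ T with p.1.lcm p.2 = d, w p.1 * w p.2| * |s.rem d|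
      ≤ (∑ p ∈ T ×ˢ T with p.1.lcm p.2 = d, |w p.1 * w p.2|) * |s.rem d| := by
        gcongr
        exact abs_sum_le_sum_abs _ _
    _ = ∑ p ∈ T ×ˢ T with p.1.lcm p.2 = d, |w p.1| * |w p.2| * |s.rem (p.1.lcm p.2)| := by
        rw [sum_mul]
        refine sum_congr rfl fun p hp ↦ ?_
        rw [(mem_filter.1 hp).2, abs_mul]

variable (s : SelbergSieve)

/-- The moduli `l ∣ P` with `l ≤ √level`, which carry the weights of the Selberg sieve. -/
noncomputable def selbergSupport : Finset ℕ := {l ∈ s.prodPrimes.divisors | (l : ℝ) ^ 2 ≤ s.level}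

/-- The sum `S = ∑ g(l)` over the moduli `l` of the Selberg sieve, where `g` is `selbergTerms`;
the main term of the sieve is `X / S`. -/
noncomputable def selbergSum : ℝ := ∑ l ∈ selbergSupport s, s.selbergTerms l

/-- Selberg's optimal weights `μ(d) / (ν(d) S) * ∑ g(k)`, the sum being over the moduli `k` that
are multiples of `d`. -/
noncomputable def selbergWeight (d : ℕ) : ℝ :=
  μ d * (s.nu d)⁻¹ * (∑ k ∈ selbergSupport s with d ∣ k, s.selbergTerms k) / selbergSum s

variable {s} {d l : ℕ}

lemma mem_selbergSupport : l ∈ selbergSupport s ↔ l ∣ s.prodPrimes ∧ (l : ℝ) ^ 2 ≤ s.level := by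
  simp [selbergSupport, prodPrimes_ne_zero]

lemma selbergSupport_subset_divisors : selbergSupport s ⊆ s.prodPrimes.divisors :=
  filter_subset _ _

lemma squarefree_of_mem_selbergSupport (hl : l ∈ selbergSupport s) : Squarefree l :=
  squarefree_of_dvd_prodPrimes (mem_selbergSupport.1 hl).1

lemma selbergTerms_pos_of_mem (hl : l ∈ selbergSupport s) : 0 < s.selbergTerms l :=
  selbergTerms_pos (mem_selbergSupport.1 hl).1

lemma mem_selbergSupport_of_dvd (hl : l ∈ selbergSupport s) (hdl : d ∣ l) :
    d ∈ selbergSupport s := by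
  have hle : d ≤ l :=
    Nat.le_of_dvd (Nat.pos_of_ne_zero (squarefree_of_mem_selbergSupport hl).ne_zero) hdl
  rw [mem_selbergSupport] at hl ⊢
  refine ⟨hdl.trans hl.1, le_trans ?_ hl.2⟩
  gcongr

lemma one_mem_selbergSupport : 1 ∈ selbergSupport s := by
  simp [mem_selbergSupport, s.one_le_level]

variable (s) in
lemma selbergSum_pos : 0 < selbergSum s :=
  sum_pos (fun _ ↦ selbergTerms_pos_of_mem) ⟨1, one_mem_selbergSupport⟩

variable (s) in
lemma selbergWeight_one : selbergWeight s 1 = 1 := by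
  simp only [selbergWeight, moebius_apply_one, Int.cast_one, s.nu_mult.map_one, inv_one, one_mul,
    one_dvd, filter_true]
  exact div_self (selbergSum_pos s).ne'

lemma selbergWeight_eq_zero (hd : d ∉ selbergSupport s) : selbergWeight s d = 0 := by
  have hempty : {k ∈ selbergSupport s | d ∣ k} = ∅ :=
    filter_eq_empty_iff.2 fun _ hk hdk ↦ hd (mem_selbergSupport_of_dvd hk hdk)
  simp [selbergWeight, hempty]

lemma sum_nu_mul_selbergWeight (l : ℕ) :
    ∑ d ∈ s.prodPrimes.divisors with l ∣ d, s.nu d * selbergWeight s d =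
      if l ∈ selbergSupport s then μ l * s.selbergTerms l / selbergSum s else 0 := by
  calc ∑ d ∈ s.prodPrimes.divisors with l ∣ d, s.nu d * selbergWeight s d
      = ∑ d ∈ s.prodPrimes.divisors with l ∣ d, ∑ k ∈ selbergSupport s with d ∣ k,
          μ d * (s.selbergTerms k / selbergSum s) := by
        refine sum_congr rfl fun d hd ↦ ?_
        have hnu : s.nu d ≠ 0 := nu_ne_zero (Nat.dvd_of_mem_divisors (mem_filter.1 hd).1)
        rw [selbergWeight, ← mul_sum, ← sum_div]
        field_simp
    _ = ∑ k ∈ selbergSupport s with l ∣ k, ∑ d ∈ k.divisors with l ∣ d,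
          μ d * (s.selbergTerms k / selbergSum s) := by
        refine sum_comm' fun d k ↦ ?_
        simp only [mem_filter, Nat.mem_divisors]
        constructor
        · rintro ⟨⟨-, hld⟩, hk, hdk⟩
          exact ⟨⟨⟨hdk, (squarefree_of_mem_selbergSupport hk).ne_zero⟩, hld⟩, hk, hld.trans hdk⟩
        · rintro ⟨⟨⟨hdk, -⟩, hld⟩, hk, -⟩
          exact ⟨⟨⟨hdk.trans (mem_selbergSupport.1 hk).1, prodPrimes_ne_zero⟩, hld⟩, hk, hdk⟩
    _ = ∑ k ∈ selbergSupport s with l ∣ k,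
          if k = l then μ l * (s.selbergTerms k / selbergSum s) else 0 := by
        refine sum_congr rfl fun k hk ↦ ?_
        rw [mem_filter] at hk
        rw [← sum_mul, ← Int.cast_sum,
          sum_moebius_filter_dvd (squarefree_of_mem_selbergSupport hk.1) hk.2]
        split_ifs <;> simp
    _ = if l ∈ selbergSupport s then μ l * s.selbergTerms l / selbergSum s else 0 := by
        simp [mul_div_assoc]

variable (s) in
lemma mainSum_lambdaSquared_selbergWeight :
    s.mainSum (lambdaSquared (selbergWeight s)) = (selbergSum s)⁻¹ := by
  have hS := (selbergSum_pos s).ne'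
  calc s.mainSum (lambdaSquared (selbergWeight s))
      = ∑ l ∈ s.prodPrimes.divisors, if l ∈ selbergSupport s then
          (s.selbergTerms l)⁻¹ * (μ l * s.selbergTerms l / selbergSum s) ^ 2 else 0 := by
        rw [mainSum_lambdaSquared_eq_sum_mul_sum_sq]
        refine sum_congr rfl fun l _ ↦ ?_
        rw [← sum_filter, sum_nu_mul_selbergWeight]
        split_ifs <;> simp
    _ = ∑ l ∈ selbergSupport s, s.selbergTerms l / selbergSum s ^ 2 := by
        rw [sum_ite_mem, inter_eq_right.2 selbergSupport_subset_divisors]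
        refine sum_congr rfl fun l hl ↦ ?_
        have hg := (selbergTerms_pos_of_mem hl).ne'
        have hmu : (μ l : ℝ) ^ 2 = 1 := by
          exact_mod_cast moebius_sq_eq_one_of_squarefree (squarefree_of_mem_selbergSupport hl)
        rw [div_pow, mul_pow, hmu]
        field_simp
    _ = (selbergSum s)⁻¹ := by
        rw [← sum_div, ← selbergSum]
        field_simp

-- Division by `l` maps the multiples of `d` injectively to moduli `m` with `gcd(m, d) = d / l`.
lemma inv_selbergTerms_mul_sum_le (hl : l ∣ d) :
    (s.selbergTerms l)⁻¹ * ∑ k ∈ selbergSupport s with d ∣ k, s.selbergTerms k ≤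
      ∑ m ∈ selbergSupport s with m.gcd d = d / l, s.selbergTerms m := by
  have hterm : ∀ k ∈ {k ∈ selbergSupport s | d ∣ k},
      (s.selbergTerms l)⁻¹ * s.selbergTerms k = s.selbergTerms (k / l) := by
    intro k hk
    rw [mem_filter] at hk
    have hlk := hl.trans hk.2
    rw [selbergTerms_isMultiplicative.map_div_of_coprime hlk, div_eq_inv_mul]
    · exact Nat.coprime_of_squarefree_mul
        ((Nat.div_mul_cancel hlk).symm ▸ squarefree_of_mem_selbergSupport hk.1)
    · exact (selbergTerms_pos_of_mem (mem_selbergSupport_of_dvd hk.1 hlk)).ne'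
  have hinj : Set.InjOn (· / l) ({k ∈ selbergSupport s | d ∣ k} : Set ℕ) := by
    intro a ha b hb hab
    exact (Nat.div_left_inj (hl.trans ha.2) (hl.trans hb.2)).1 hab
  rw [mul_sum, sum_congr rfl hterm, ← sum_image (f := s.selbergTerms) (by simpa using hinj)]
  refine sum_le_sum_of_subset_of_nonneg (image_subset_iff.2 fun k hk ↦ ?_) fun m hm _ ↦
    (selbergTerms_pos_of_mem (mem_filter.1 hm).1).le
  rw [mem_filter] at hk ⊢
  exact ⟨mem_selbergSupport_of_dvd hk.1 (Nat.div_dvd_of_dvd (hl.trans hk.2)),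
    gcd_div_left_of_squarefree (squarefree_of_mem_selbergSupport hk.1) hk.2 hl⟩

lemma inv_nu_mul_sum_selbergTerms_le (hd : d ∣ s.prodPrimes) :
    (s.nu d)⁻¹ * ∑ k ∈ selbergSupport s with d ∣ k, s.selbergTerms k ≤ selbergSum s := by
  have hd0 : d ≠ 0 := (squarefree_of_dvd_prodPrimes hd).ne_zero
  calc (s.nu d)⁻¹ * ∑ k ∈ selbergSupport s with d ∣ k, s.selbergTerms k
      = ∑ l ∈ d.divisors,
          (s.selbergTerms l)⁻¹ * ∑ k ∈ selbergSupport s with d ∣ k, s.selbergTerms k := by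
        rw [nu_inv_eq_sum_divisors_inv_selbergTerms hd, ← sum_filter,
          Nat.divisors_filter_dvd_of_dvd prodPrimes_ne_zero hd, sum_mul]
    _ ≤ ∑ l ∈ d.divisors, ∑ m ∈ selbergSupport s with m.gcd d = d / l, s.selbergTerms m :=
        sum_le_sum fun l hl ↦ inv_selbergTerms_mul_sum_le (Nat.dvd_of_mem_divisors hl)
    _ = ∑ l ∈ d.divisors, ∑ m ∈ selbergSupport s with m.gcd d = l, s.selbergTerms m :=
        Nat.sum_div_divisors d fun l ↦ ∑ m ∈ selbergSupport s with m.gcd d = l, s.selbergTerms m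
    _ = selbergSum s := sum_fiberwise_of_maps_to
        (fun m _ ↦ Nat.mem_divisors.2 ⟨Nat.gcd_dvd_right m d, hd0⟩) _

lemma abs_selbergWeight_le_one (hd : d ∣ s.prodPrimes) : |selbergWeight s d| ≤ 1 := by
  have hsum : 0 ≤ (s.nu d)⁻¹ * ∑ k ∈ selbergSupport s with d ∣ k, s.selbergTerms k :=
    mul_nonneg (inv_nonneg.2 (nu_pos_of_dvd_prodPrimes hd).le)
      (sum_nonneg fun k hk ↦ (selbergTerms_pos_of_mem (mem_filter.1 hk).1).le)
  have hmu : |(μ d : ℝ)| ≤ 1 := by exact_mod_cast abs_moebius_le_one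
  rw [selbergWeight, abs_div, abs_of_pos (selbergSum_pos s), div_le_one (selbergSum_pos s),
    mul_assoc, abs_mul, abs_of_nonneg hsum]
  exact (mul_le_of_le_one_left hsum hmu).trans (inv_nu_mul_sum_selbergTerms_le hd)

variable (s) in
theorem siftedSum_le_div_selbergSum_add :
    s.siftedSum ≤ s.totalMass / selbergSum s +
      ∑ p ∈ selbergSupport s ×ˢ selbergSupport s, |s.rem (p.1.lcm p.2)| := by
  have hweight : ∀ d ∈ selbergSupport s, |selbergWeight s d| ≤ 1 := fun d hd ↦
    abs_selbergWeight_le_one (mem_selbergSupport.1 hd).1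
  calc s.siftedSum
      ≤ s.totalMass * s.mainSum (lambdaSquared (selbergWeight s)) +
          s.errSum (lambdaSquared (selbergWeight s)) :=
        siftedSum_le_mainSum_errSum_of_upperMoebius _
          (upperMoebius_lambdaSquared _ (selbergWeight_one s))
    _ ≤ s.totalMass / selbergSum s + ∑ p ∈ selbergSupport s ×ˢ selbergSupport s,
          |selbergWeight s p.1| * |selbergWeight s p.2| * |s.rem (p.1.lcm p.2)| := by
        rw [mainSum_lambdaSquared_selbergWeight, ← div_eq_mul_inv]
        gcongr
        exact errSum_lambdaSquared_le _ selbergSupport_subset_divisors fun _ ↦ selbergWeight_eq_zero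
    _ ≤ s.totalMass / selbergSum s +
          ∑ p ∈ selbergSupport s ×ˢ selbergSupport s, |s.rem (p.1.lcm p.2)| := by
        gcongr with p hp
        rw [mem_product] at hp
        exact mul_le_of_le_one_left (abs_nonneg _)
          (mul_le_one₀ (hweight _ hp.1) (abs_nonneg _) (hweight _ hp.2))

end Selberg

section TotientSum

open UniqueFactorizationMonoid
open scoped Nat

/-- The sum `∑ 1 / φ(k)` over the squarefree `k ≤ N`, which is the sum `S` of the Selberg sieve of
an interval by the primes up to `N`. -/
noncomputable def invTotientSum (N : ℕ) : ℝ := ∑ k ∈ Icc 1 N with Squarefree k, (φ k : ℝ)⁻¹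

lemma inv_totient_eq_inv_mul_prod (n : ℕ) :
    (φ n : ℝ)⁻¹ = (n : ℝ)⁻¹ * ∏ p ∈ n.primeFactors, (1 - (p : ℝ)⁻¹)⁻¹ := by
  have h : (φ n : ℝ) = n * ∏ p ∈ n.primeFactors, (1 - (p : ℝ)⁻¹) := by
    simpa using congrArg (Rat.cast : ℚ → ℝ) (Nat.totient_eq_mul_prod_factors n)
  rw [h, mul_inv, prod_inv_distrib]

lemma sum_inv_le_prod_of_forall_mem_factoredNumbers {U s : Finset ℕ}
    (hU : ∀ m ∈ U, m ∈ Nat.factoredNumbers s) :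
    ∑ m ∈ U, (m : ℝ)⁻¹ ≤ ∏ p ∈ s with p.Prime, (1 - (p : ℝ)⁻¹)⁻¹ := by
  classical
  let f : ℕ →* ℝ :=
    { toFun n := (n : ℝ)⁻¹, map_one' := by simp, map_mul' := fun m n ↦ by simp [mul_comm] }
  have hf {p : ℕ} (hp : p.Prime) : ‖f p‖ < 1 := by
    have hp1 : (1 : ℝ) < p := by exact_mod_cast hp.one_lt
    simpa [f] using inv_lt_one_of_one_lt₀ hp1
  have hsum := (EulerProduct.summable_and_hasSum_factoredNumbers_prod_filter_prime_geometric hf s).2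
  rw [← sum_subtype_of_mem _ hU]
  exact sum_le_hasSum _ (fun m _ ↦ inv_nonneg.2 (Nat.cast_nonneg m)) hsum

-- The numbers `n` with radical `k` are `k * m`, where every prime factor of `m` divides `k`.
lemma sum_inv_le_inv_totient_of_radical_eq {T : Finset ℕ} {k : ℕ}
    (hT : ∀ n ∈ T, n ≠ 0 ∧ radical n = k) : ∑ n ∈ T, (n : ℝ)⁻¹ ≤ (φ k : ℝ)⁻¹ := by
  have hmul : ∀ n ∈ T, k * (n / k) = n := fun n hn ↦
    Nat.mul_div_cancel' ((hT n hn).2 ▸ radical_dvd_self)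
  have hinj : Set.InjOn (· / k) (T : Set ℕ) := fun a ha b hb hab ↦ by
    rw [← hmul a ha, ← hmul b hb]
    exact congrArg (k * ·) hab
  have hfactored : ∀ m ∈ T.image (· / k), m ∈ Nat.factoredNumbers k.primeFactors := by
    refine forall_mem_image.2 fun n hn ↦ ?_
    have hdvd : n / k ∣ n := Dvd.intro_left k (hmul n hn)
    rw [Nat.mem_factoredNumbers_iff_primeFactors_subset, ← (hT n hn).2, Nat.primeFactors_radical,
      (hT n hn).2]
    exact ⟨ne_zero_of_dvd_ne_zero (hT n hn).1 hdvd, Nat.primeFactors_mono hdvd (hT n hn).1⟩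
  calc ∑ n ∈ T, (n : ℝ)⁻¹
      = (k : ℝ)⁻¹ * ∑ n ∈ T, ((n / k : ℕ) : ℝ)⁻¹ := by
        rw [mul_sum]
        refine sum_congr rfl fun n hn ↦ ?_
        rw [← mul_inv, ← Nat.cast_mul, hmul n hn]
    _ = (k : ℝ)⁻¹ * ∑ m ∈ T.image (· / k), (m : ℝ)⁻¹ := by rw [sum_image hinj]
    _ ≤ (k : ℝ)⁻¹ * ∏ p ∈ k.primeFactors with p.Prime, (1 - (p : ℝ)⁻¹)⁻¹ := by
        gcongr
        exact sum_inv_le_prod_of_forall_mem_factoredNumbers hfactored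
    _ = (φ k : ℝ)⁻¹ := by
        rw [filter_true_of_mem fun p ↦ Nat.prime_of_mem_primeFactors, inv_totient_eq_inv_mul_prod]

lemma log_add_one_le_invTotientSum (N : ℕ) : Real.log (N + 1) ≤ invTotientSum N := by
  have hradical : ∀ n ∈ Icc 1 N, radical n ∈ {k ∈ Icc 1 N | Squarefree k} := fun n hn ↦ by
    rw [mem_Icc] at hn
    have hle : radical n ≤ n := Nat.radical_le_self_iff.2 (by omega)
    exact mem_filter.2 ⟨mem_Icc.2 ⟨Nat.radical_pos n, hle.trans hn.2⟩, squarefree_radical⟩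
  calc Real.log (N + 1) ≤ ∑ n ∈ Icc 1 N, (n : ℝ)⁻¹ := by
        simpa [harmonic_eq_sum_Icc] using log_add_one_le_harmonic N
    _ = ∑ k ∈ Icc 1 N with Squarefree k, ∑ n ∈ Icc 1 N with radical n = k, (n : ℝ)⁻¹ :=
        (sum_fiberwise_of_maps_to hradical _).symm
    _ ≤ invTotientSum N := sum_le_sum fun k _ ↦
        sum_inv_le_inv_totient_of_radical_eq fun n hn ↦ by
          rw [mem_filter, mem_Icc] at hn
          exact ⟨by omega, hn.2⟩

end TotientSum

section Interval

open BoundingSieve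
open scoped Nat

lemma abs_card_filter_dvd_Ioc_floor_sub_le {w y : ℝ} (hw : 0 ≤ w) (hy : 0 ≤ y) (d : ℕ) :
    |(#{n ∈ Ioc ⌊w⌋₊ ⌊w + y⌋₊ | d ∣ n} : ℝ) - y / d| ≤ 1 := by
  have hcard : #{n ∈ Ioc ⌊w⌋₊ ⌊w + y⌋₊ | d ∣ n} + ⌊w⌋₊ / d = ⌊w + y⌋₊ / d := by
    have hmono : ⌊w⌋₊ ≤ ⌊w + y⌋₊ := Nat.floor_mono (by linarith)
    rw [← Nat.Ioc_filter_dvd_card_eq_div, ← Nat.Ioc_filter_dvd_card_eq_div,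
      ← Ioc_union_Ioc_eq_Ioc (Nat.zero_le _) hmono, filter_union, card_union_of_disjoint, add_comm]
    exact disjoint_filter_filter (Ioc_disjoint_Ioc_of_le le_rfl)
  rw [← Nat.floor_div_natCast, ← Nat.floor_div_natCast] at hcard
  have hcard' : (#{n ∈ Ioc ⌊w⌋₊ ⌊w + y⌋₊ | d ∣ n} : ℝ) + ⌊w / d⌋₊ = ⌊(w + y) / d⌋₊ := by
    exact_mod_cast hcard
  have hw_le := Nat.floor_le (div_nonneg hw d.cast_nonneg)
  have hw_lt := Nat.lt_floor_add_one (w / d)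
  have hwy_le := Nat.floor_le (div_nonneg (add_nonneg hw hy) d.cast_nonneg)
  have hwy_lt := Nat.lt_floor_add_one ((w + y) / d)
  rw [add_div] at hcard' hwy_le hwy_lt
  rw [abs_le]
  constructor <;> linarith

variable {w y : ℝ} {N : ℕ}

/-- The Selberg sieve that removes the multiples of the primes `p ≤ N` from the integers in
`(w, w + y]`, with density `1 / d` at `d`. The level `N ^ 2` makes the moduli run up to `N`. -/
noncomputable def intervalSieve (w y : ℝ) (hN : 1 ≤ N) : SelbergSieve where
  support := Ioc ⌊w⌋₊ ⌊w + y⌋₊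
  prodPrimes := primorial N
  prodPrimes_squarefree := squarefree_primorial N
  weights _ := 1
  weights_nonneg _ := zero_le_one
  totalMass := y
  nu := ⟨fun n ↦ (n : ℝ)⁻¹, by simp⟩
  nu_mult := ⟨by simp, by simp [mul_comm]⟩
  nu_pos_of_prime p hp _ := by simpa using hp.pos
  nu_lt_one_of_prime p hp _ := inv_lt_one_of_one_lt₀ (by exact_mod_cast hp.one_lt)
  level := N ^ 2
  one_le_level := by exact_mod_cast Nat.one_le_pow 2 N hN

lemma selbergSupport_intervalSieve (hN : 1 ≤ N) :
    selbergSupport (intervalSieve w y hN) = {k ∈ Icc 1 N | Squarefree k} := by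
  ext k
  have hlevel : (k : ℝ) ^ 2 ≤ (N : ℝ) ^ 2 ↔ k ≤ N := by
    rw [pow_le_pow_iff_left₀ k.cast_nonneg N.cast_nonneg two_ne_zero, Nat.cast_le]
  simp only [mem_selbergSupport, intervalSieve, hlevel, mem_filter, mem_Icc]
  constructor
  · rintro ⟨hdvd, hle⟩
    exact ⟨⟨Nat.pos_of_dvd_of_pos hdvd (primorial_pos N), hle⟩,
      (squarefree_primorial N).squarefree_of_dvd hdvd⟩
  · rintro ⟨⟨-, hle⟩, hk⟩
    exact ⟨hk.dvd_primorial.trans (primorial_dvd_primorial hle), hle⟩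

lemma selbergSum_intervalSieve (hN : 1 ≤ N) :
    selbergSum (intervalSieve w y hN) = invTotientSum N := by
  rw [selbergSum, selbergSupport_intervalSieve]
  refine sum_congr rfl fun k _ ↦ ?_
  rw [selbergTerms_apply, inv_totient_eq_inv_mul_prod]
  rfl

lemma abs_rem_intervalSieve_le_one (hw : 0 ≤ w) (hy : 0 ≤ y) (hN : 1 ≤ N) (d : ℕ) :
    |(intervalSieve w y hN).rem d| ≤ 1 := by
  have h := abs_card_filter_dvd_Ioc_floor_sub_le hw hy d
  rw [card_filter, div_eq_inv_mul] at h
  simpa [rem, multSum, intervalSieve] using h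

theorem card_filter_coprime_primorial_Ioc_floor_le (hw : 0 ≤ w) (hy : 0 ≤ y) (hN : 1 ≤ N) :
    (#{n ∈ Ioc ⌊w⌋₊ ⌊w + y⌋₊ | (primorial N).Coprime n} : ℝ) ≤ y / invTotientSum N + N ^ 2 := by
  set s := intervalSieve w y hN with hs
  have hcard : #(selbergSupport s) ≤ N := by
    rw [selbergSupport_intervalSieve]
    simpa using card_filter_le (Icc 1 N) Squarefree
  calc (#{n ∈ Ioc ⌊w⌋₊ ⌊w + y⌋₊ | (primorial N).Coprime n} : ℝ)
      = s.siftedSum := by simp [siftedSum, hs, intervalSieve]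
    _ ≤ y / selbergSum s + ∑ p ∈ selbergSupport s ×ˢ selbergSupport s, |s.rem (p.1.lcm p.2)| :=
        siftedSum_le_div_selbergSum_add s
    _ ≤ y / selbergSum s + ∑ p ∈ selbergSupport s ×ˢ selbergSupport s, 1 := by
        gcongr
        exact abs_rem_intervalSieve_le_one hw hy hN _
    _ ≤ y / invTotientSum N + N ^ 2 := by
        rw [selbergSum_intervalSieve, sum_const, card_product, nsmul_one, ← sq]
        gcongr
        exact_mod_cast Nat.pow_le_pow_left hcard 2

end Interval

section Level

variable {u z : ℝ}

lemma invTotientSum_one : invTotientSum 1 = 1 := by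
  simp [invTotientSum, filter_singleton]

lemma invTotientSum_two : invTotientSum 2 = 2 := by
  have h : {k ∈ Icc 1 2 | Squarefree k} = {1, 2} := by
    ext k
    simp only [mem_filter, mem_Icc, mem_insert, mem_singleton]
    constructor
    · omega
    · rintro (rfl | rfl)
      · simp
      · simp [Nat.prime_two.prime.squarefree]
  rw [invTotientSum, h]
  norm_num

lemma inv_two_add_four_div_exp_sq_le (hu₁ : 1 < u) (hu₂ : u ≤ 3.6) :
    (2 : ℝ)⁻¹ + 4 / Real.exp u ^ 2 ≤ 2 / u := by
  have hexp : 2.7 * u ≤ Real.exp u :=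
    calc 2.7 * u ≤ Real.exp 1 * Real.exp (u - 1) := by
          gcongr
          · linarith [Real.exp_one_gt_d9]
          · linarith [Real.add_one_le_exp (u - 1)]
      _ = Real.exp u := by rw [← Real.exp_add, add_sub_cancel]
  calc (2 : ℝ)⁻¹ + 4 / Real.exp u ^ 2 ≤ 2⁻¹ + 4 / (2.7 * u) ^ 2 := by gcongr
    _ ≤ 2 / u := by
      field_simp
      nlinarith [mul_nonneg (sub_nonneg.2 hu₁.le) (sub_nonneg.2 hu₂)]

lemma add_one_div_two_le_sub_log (hu : 3.6 ≤ u) : (u + 1) / 2 ≤ u - Real.log u := by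
  have htangent : Real.log (u / 4) ≤ u / 4 - 1 := Real.log_le_sub_one_of_pos (by linarith)
  have hlog_four : Real.log 4 = 2 * Real.log 2 := by
    rw [show (4 : ℝ) = 2 ^ 2 by norm_num, Real.log_pow, Nat.cast_ofNat]
  rw [Real.log_div (by linarith) four_ne_zero, hlog_four] at htangent
  linarith [Real.log_two_lt_d9]

lemma exists_inv_invTotientSum_add_sq_div_le_of_large_log (hz : 0 < z) (hu : 3.6 ≤ Real.log z) :
    ∃ N : ℕ, 1 ≤ N ∧ (N : ℝ) ≤ z ∧
      (invTotientSum N)⁻¹ + (N : ℝ) ^ 2 / z ^ 2 ≤ 2 / Real.log z := by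
  set u := Real.log z
  have hu0 : 0 < u := by linarith
  have hlog : (u + 1) / 2 ≤ Real.log (z / u) := by
    rw [Real.log_div hz.ne' hu0.ne']
    exact add_one_div_two_le_sub_log hu
  have hN : (⌊z / u⌋₊ : ℝ) ≤ z / u := Nat.floor_le (by positivity)
  have hS : (u + 1) / 2 ≤ invTotientSum ⌊z / u⌋₊ :=
    hlog.trans <| (Real.log_le_log (by positivity) (Nat.lt_floor_add_one _).le).trans
      (log_add_one_le_invTotientSum _)
  refine ⟨⌊z / u⌋₊, Nat.le_floor ?_, hN.trans (div_le_self hz.le (by linarith)), ?_⟩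
  · rw [Nat.cast_one, ← Real.log_nonneg_iff (by positivity)]
    linarith
  calc (invTotientSum ⌊z / u⌋₊)⁻¹ + (⌊z / u⌋₊ : ℝ) ^ 2 / z ^ 2
      ≤ ((u + 1) / 2)⁻¹ + (z / u) ^ 2 / z ^ 2 := by gcongr
    _ = 2 / (u + 1) + 1 / u ^ 2 := by field_simp
    _ ≤ 2 / u := by
      rw [div_add_div _ _ (by positivity) (by positivity), div_le_div_iff₀ (by positivity) hu0]
      nlinarith

lemma exists_inv_invTotientSum_add_sq_div_le (hz : 1 < z) :
    ∃ N : ℕ, 1 ≤ N ∧ (N : ℝ) ≤ z ∧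
      (invTotientSum N)⁻¹ + (N : ℝ) ^ 2 / z ^ 2 ≤ 2 / Real.log z := by
  have hz0 : 0 < z := by linarith
  have hlog : 0 < Real.log z := Real.log_pos hz
  rcases le_or_gt (Real.log z) 1 with h₁ | h₁
  · refine ⟨1, le_rfl, by simpa using hz.le, ?_⟩
    calc (invTotientSum 1)⁻¹ + ((1 : ℕ) : ℝ) ^ 2 / z ^ 2
        = 1 + 1 / z ^ 2 := by simp [invTotientSum_one]
      _ ≤ 1 + 1 := by
        gcongr
        exact div_le_one_of_le₀ (one_le_pow₀ hz.le) (by positivity)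
      _ ≤ 2 / Real.log z := by
        rw [one_add_one_eq_two]
        exact le_div_self zero_le_two hlog h₁
  rcases le_or_gt (Real.log z) 3.6 with h₂ | h₂
  · have hz2 : 2 ≤ z := by
      linarith [(Real.lt_log_iff_exp_lt hz0).1 h₁, Real.exp_one_gt_d9]
    have h := inv_two_add_four_div_exp_sq_le h₁ h₂
    rw [Real.exp_log hz0] at h
    exact ⟨2, one_le_two, by simpa using hz2, by simpa [invTotientSum_two] using mod_cast h⟩
  · exact exists_inv_invTotientSum_add_sq_div_le_of_large_log hz0 h₂.le

end Level

open scoped Classical in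
theorem statement_12_general (x y z : ℝ) (hz : 1 < z) (hzy : z ≤ Real.sqrt y) :
    (((Finset.Icc 1 ⌊x⌋₊).filter
        (fun n : ℕ => x - y < (n : ℝ) ∧ ∀ p : ℕ, p.Prime → p ∣ n → z < (p : ℝ))).card : ℝ) ≤
      2 * y / Real.log z := by
  have hzy2 : z ^ 2 ≤ y := (Real.le_sqrt' (by linarith)).1 hzy
  have hy : 0 < y := by nlinarith
  obtain ⟨N, hN1, hNz, hN⟩ := exists_inv_invTotientSum_add_sq_div_le hz
  set w := max (x - y) 0
  have hcoprime : ∀ n : ℕ, (∀ p : ℕ, p.Prime → p ∣ n → z < p) → (primorial N).Coprime n :=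
    fun n hn ↦ Nat.coprime_of_dvd fun p hp hpN hpn ↦ (hn p hp hpn).not_ge <|
      (Nat.cast_le.2 (hp.dvd_primorial_iff.1 hpN)).trans hNz
  have hxw : x ≤ w + y := by linarith [le_max_left (x - y) 0]
  calc _ ≤ (#{n ∈ Ioc ⌊w⌋₊ ⌊w + y⌋₊ | (primorial N).Coprime n} : ℝ) := by
        refine Nat.cast_le.2 (card_le_card fun n hn ↦ ?_)
        simp only [mem_filter, mem_Icc, mem_Ioc] at hn ⊢
        obtain ⟨⟨hn1, hnx⟩, hxyn, hprime⟩ := hn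
        have hwn : w < n := max_lt hxyn (by exact_mod_cast hn1)
        exact ⟨⟨(Nat.floor_lt (le_max_right _ _)).2 hwn, hnx.trans (Nat.floor_mono hxw)⟩,
          hcoprime n hprime⟩
    _ ≤ y / invTotientSum N + N ^ 2 :=
        card_filter_coprime_primorial_Ioc_floor_le (le_max_right _ _) hy.le hN1
    _ ≤ y / invTotientSum N + y * (N ^ 2 / z ^ 2) := by
        gcongr
        rw [mul_div_assoc', le_div_iff₀ (by positivity), mul_comm y]
        gcongr
    _ = y * ((invTotientSum N)⁻¹ + N ^ 2 / z ^ 2) := by ring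
    _ ≤ y * (2 / Real.log z) := by gcongr
    _ = 2 * y / Real.log z := by ring

open scoped Classical in
/-- Large sieve bound: the number of integers in `(x - y, x]` all of whose prime
factors exceed `z` (with `n = 1` counted, since `P⁻(1) = +∞`) is at most `2y / log z`. -/
theorem statement_12 (x y z : ℝ) (hy : 2 ≤ y) (hyx : y ≤ x) (hz : 2 ≤ z)
    (hzy : z ≤ Real.sqrt y) :
    (((Finset.Icc 1 ⌊x⌋₊).filter
        (fun n : ℕ => x - y < (n : ℝ) ∧ ∀ p : ℕ, p.Prime → p ∣ n → z < (p : ℝ))).card : ℝ) ≤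
      2 * y / Real.log z :=
  statement_12_general x y z (by linarith) hzy
end

section
/- Let ℓ ≥ 1 be a real number. Assume x ≥ exp(7^{28} (12eℓ)^{28 log(192eℓ)}) and z ≥ x^{1/(3ℓ)}. Then the number of positive integers n ≤ z with P⁺(n) < log x · log log x is strictly less than z^{1/4}. -/
/-- The largest prime factor of `n`, with the convention `P⁺(1) = 1`. -/
def maxPrimeFactor (n : ℕ) : ℕ := max 1 (n.primeFactors.sup id)

/-!
Rankin's trick: for every `σ ∈ (0, 1)` the number of `n ≤ z` all of whose prime factors are at most
`y` is at most `∑ (z / n) ^ σ` over all such `n`, hence at most `z ^ σ * ∏ p ≤ y, (1 - p ^ (-σ))⁻¹`.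
Estimating the sum of `p ^ (-σ)` over primes trivially by the sum over all integers bounds the
product by `exp (C y ^ (1 - σ))` with `C = 1 / ((1 - σ) (1 - 2 ^ (-σ)))`. For `σ = 1 / 5` one has
`C ≤ 10`, so the count is below `z ^ (1 / 4)` as soon as `10 y ^ (4 / 5) < (1 / 20) log z`. When
`y = log x * log (log x)` and `log z ≥ log x / (3 ℓ)`, this follows from
`(600 ℓ) ^ 5 * log (log x) ^ 4 < log x`.
-/

open Real in
lemma one_sub_mul_rpow_neg_le {σ : ℝ} (hσ₀ : 0 ≤ σ) (hσ₁ : σ ≤ 1) {a : ℝ} (ha : 0 ≤ a) :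
    (1 - σ) * (a + 1) ^ (-σ) ≤ (a + 1) ^ (1 - σ) - a ^ (1 - σ) := by
  have hpos : 0 < a + 1 := by linarith
  have amgm : a ^ (1 - σ) * (a + 1) ^ σ ≤ (1 - σ) * a + σ * (a + 1) :=
    geom_mean_le_arith_mean2_weighted (by linarith) hσ₀ ha hpos.le (by ring)
  have hcancel : (a + 1) ^ σ * (a + 1) ^ (-σ) = 1 := by rw [← rpow_add hpos]; simp
  have hsplit : (a + 1) ^ (1 - σ) = (a + 1) * (a + 1) ^ (-σ) := by
    rw [sub_eq_add_neg, rpow_add hpos, rpow_one]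
  have key : a ^ (1 - σ) ≤ (a + σ) * (a + 1) ^ (-σ) :=
    calc a ^ (1 - σ) = a ^ (1 - σ) * (a + 1) ^ σ * (a + 1) ^ (-σ) := by
          rw [mul_assoc, hcancel, mul_one]
      _ ≤ ((1 - σ) * a + σ * (a + 1)) * (a + 1) ^ (-σ) := by gcongr
      _ = (a + σ) * (a + 1) ^ (-σ) := by ring
  rw [hsplit]
  linarith

lemma sum_Icc_rpow_neg_le {σ : ℝ} (hσ₀ : 0 ≤ σ) (hσ₁ : σ < 1) (N : ℕ) :
    ∑ m ∈ Finset.Icc 1 N, (m : ℝ) ^ (-σ) ≤ (N : ℝ) ^ (1 - σ) / (1 - σ) := by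
  have hσ : 0 < 1 - σ := by linarith
  rw [le_div_iff₀' hσ]
  induction N with
  | zero => simp [Real.zero_rpow hσ.ne']
  | succ N ih =>
    rw [Finset.sum_Icc_succ_top (by lia), mul_add, Nat.cast_succ]
    linarith [one_sub_mul_rpow_neg_le hσ₀ hσ₁.le N.cast_nonneg]

lemma sum_primesLE_rpow_neg_le {σ : ℝ} (hσ₀ : 0 ≤ σ) (hσ₁ : σ < 1) (N : ℕ) :
    ∑ p ∈ N.primesLE, (p : ℝ) ^ (-σ) ≤ (N : ℝ) ^ (1 - σ) / (1 - σ) := by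
  refine le_trans ?_ (sum_Icc_rpow_neg_le hσ₀ hσ₁ N)
  rw [Nat.primesLE_eq_filter_Icc_one]
  exact Finset.sum_le_sum_of_subset_of_nonneg (Finset.filter_subset _ _) fun _ _ _ ↦ by positivity

lemma inv_one_sub_le_exp {t : ℝ} (ht : t < 1) : (1 - t)⁻¹ ≤ Real.exp (t / (1 - t)) := by
  have hne : 1 - t ≠ 0 := by linarith
  calc (1 - t)⁻¹ = t / (1 - t) + 1 := by field_simp; ring
    _ ≤ Real.exp (t / (1 - t)) := Real.add_one_le_exp _

lemma prod_primesLE_inv_one_sub_rpow_neg_le_exp {σ : ℝ} (hσ₀ : 0 < σ) (hσ₁ : σ < 1) (N : ℕ) :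
    ∏ p ∈ N.primesLE, (1 - (p : ℝ) ^ (-σ))⁻¹ ≤
      Real.exp ((N : ℝ) ^ (1 - σ) / ((1 - σ) * (1 - 2 ^ (-σ)))) := by
  have two_rpow_lt : (2 : ℝ) ^ (-σ) < 1 :=
    Real.rpow_lt_one_of_one_lt_of_neg one_lt_two (by linarith)
  have one_sub_pos : 0 < 1 - (2 : ℝ) ^ (-σ) := by linarith
  have rpow_le_two {p : ℕ} (hp : p ∈ N.primesLE) : (p : ℝ) ^ (-σ) ≤ 2 ^ (-σ) :=
    Real.rpow_le_rpow_of_nonpos zero_lt_two (mod_cast Nat.two_le_of_mem_primesLE hp) (by linarith)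
  calc ∏ p ∈ N.primesLE, (1 - (p : ℝ) ^ (-σ))⁻¹
      ≤ ∏ p ∈ N.primesLE, Real.exp ((p : ℝ) ^ (-σ) / (1 - 2 ^ (-σ))) := by
        refine Finset.prod_le_prod (fun p hp ↦ ?_) fun p hp ↦ ?_
        · exact inv_nonneg.2 (by linarith [rpow_le_two hp])
        · refine (inv_one_sub_le_exp ((rpow_le_two hp).trans_lt two_rpow_lt)).trans ?_
          rw [Real.exp_le_exp]
          exact div_le_div_of_nonneg_left (by positivity) one_sub_pos (by linarith [rpow_le_two hp])
    _ = Real.exp ((∑ p ∈ N.primesLE, (p : ℝ) ^ (-σ)) / (1 - 2 ^ (-σ))) := by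
        rw [← Real.exp_sum, Finset.sum_div]
    _ ≤ Real.exp ((N : ℝ) ^ (1 - σ) / (1 - σ) / (1 - 2 ^ (-σ))) := by
        gcongr
        exact sum_primesLE_rpow_neg_le hσ₀.le hσ₁ N
    _ = _ := by rw [div_div]

lemma sum_smooth_le_prod_primesBelow {f : ℕ →* ℝ} (hf : ∀ n, 0 ≤ f n)
    (hf_prime : ∀ p : ℕ, p.Prime → f p < 1) {k : ℕ} {S : Finset ℕ}
    (hS : ∀ n ∈ S, n ∈ k.smoothNumbers) :
    ∑ n ∈ S, f n ≤ ∏ p ∈ k.primesBelow, (1 - f p)⁻¹ := by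
  have hsum : HasSum (fun n : k.smoothNumbers ↦ f n) (∏ p ∈ k.primesBelow, (1 - f p)⁻¹) :=
    (EulerProduct.summable_and_hasSum_smoothNumbers_prod_primesBelow_geometric
      (fun {p} hp ↦ by rw [Real.norm_of_nonneg (hf p)]; exact hf_prime p hp) k).2
  rw [← Finset.sum_subtype_of_mem f hS]
  exact sum_le_hasSum _ (fun n _ ↦ hf n) hsum

lemma card_smoothNumbersUpTo_le_rpow_mul_prod {σ : ℝ} (hσ : 0 < σ) (M k : ℕ) :
    ((Nat.smoothNumbersUpTo M k).card : ℝ) ≤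
      (M : ℝ) ^ σ * ∏ p ∈ k.primesBelow, (1 - (p : ℝ) ^ (-σ))⁻¹ := by
  let f : ℕ →* ℝ := (NNReal.toRealHom : NNReal →* ℝ).comp
    ((NNReal.rpowMonoidHom (-σ)).comp (Nat.castRingHom NNReal : ℕ →* NNReal))
  have hf (n : ℕ) : f n = (n : ℝ) ^ (-σ) := by simp [f]
  have one_le {n : ℕ} (hn : n ∈ Nat.smoothNumbersUpTo M k) : 1 ≤ (M : ℝ) ^ σ * f n := by
    obtain ⟨hnM, hsmooth⟩ := Nat.mem_smoothNumbersUpTo.1 hn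
    have hn₀ : (0 : ℝ) < n := mod_cast Nat.pos_of_ne_zero (Nat.ne_zero_of_mem_smoothNumbers hsmooth)
    rw [hf, Real.rpow_neg hn₀.le, ← div_eq_mul_inv, one_le_div (by positivity)]
    gcongr
  calc ((Nat.smoothNumbersUpTo M k).card : ℝ)
      = ∑ _n ∈ Nat.smoothNumbersUpTo M k, (1 : ℝ) := by simp
    _ ≤ ∑ n ∈ Nat.smoothNumbersUpTo M k, (M : ℝ) ^ σ * f n := Finset.sum_le_sum fun _ ↦ one_le
    _ = (M : ℝ) ^ σ * ∑ n ∈ Nat.smoothNumbersUpTo M k, f n := by rw [Finset.mul_sum]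
    _ ≤ (M : ℝ) ^ σ * ∏ p ∈ k.primesBelow, (1 - f p)⁻¹ := by
        gcongr
        refine sum_smooth_le_prod_primesBelow (fun _ ↦ ?_) (fun p hp ↦ ?_)
          fun _ hn ↦ (Nat.mem_smoothNumbersUpTo.1 hn).2
        · rw [hf]
          positivity
        · rw [hf]
          exact Real.rpow_lt_one_of_one_lt_of_neg (mod_cast hp.one_lt) (by linarith)
    _ = _ := by simp only [hf]

lemma card_smoothNumbersUpTo_succ_le {σ : ℝ} (hσ₀ : 0 < σ) (hσ₁ : σ < 1) (M N : ℕ) :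
    ((Nat.smoothNumbersUpTo M (N + 1)).card : ℝ) ≤
      (M : ℝ) ^ σ * Real.exp ((N : ℝ) ^ (1 - σ) / ((1 - σ) * (1 - 2 ^ (-σ)))) := by
  refine (card_smoothNumbersUpTo_le_rpow_mul_prod hσ₀ M (N + 1)).trans ?_
  gcongr
  exact prod_primesLE_inv_one_sub_rpow_neg_le_exp hσ₀ hσ₁ N

lemma two_rpow_neg_one_fifth_le : (2 : ℝ) ^ (-(1 / 5) : ℝ) ≤ 7 / 8 := by
  refine le_of_pow_le_pow_left₀ (n := 5) (by norm_num) (by norm_num) ?_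
  rw [← Real.rpow_mul_natCast zero_le_two]
  norm_num [Real.rpow_neg_one]

lemma card_smoothNumbersUpTo_lt_rpow_one_fourth {z : ℝ} (hz : 0 < z) {N : ℕ}
    (h : 200 ^ 5 * (N : ℝ) ^ 4 < Real.log z ^ 5) :
    ((Nat.smoothNumbersUpTo ⌊z⌋₊ (N + 1)).card : ℝ) < z ^ (1 / 4 : ℝ) := by
  have hlog : 0 < Real.log z :=
    (Odd.pow_pos_iff (by decide : Odd 5)).1 (h.trans_le' (by positivity))
  have hN : 200 * (N : ℝ) ^ (1 - 1 / 5 : ℝ) < Real.log z := by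
    refine lt_of_pow_lt_pow_left₀ 5 hlog.le ?_
    rw [mul_pow, ← Real.rpow_mul_natCast N.cast_nonneg]
    norm_num at h ⊢
    exact_mod_cast h
  have hconst : 1 / 10 ≤ (1 - 1 / 5 : ℝ) * (1 - 2 ^ (-(1 / 5) : ℝ)) := by
    linarith [two_rpow_neg_one_fifth_le]
  have hexp : (N : ℝ) ^ (1 - 1 / 5 : ℝ) / ((1 - 1 / 5) * (1 - 2 ^ (-(1 / 5) : ℝ))) <
      Real.log z * (1 / 20) :=
    calc _ ≤ (N : ℝ) ^ (1 - 1 / 5 : ℝ) / (1 / 10) := by gcongr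
      _ < Real.log z * (1 / 20) := by linarith
  calc ((Nat.smoothNumbersUpTo ⌊z⌋₊ (N + 1)).card : ℝ)
      ≤ (⌊z⌋₊ : ℝ) ^ (1 / 5 : ℝ) *
          Real.exp ((N : ℝ) ^ (1 - 1 / 5 : ℝ) / ((1 - 1 / 5) * (1 - 2 ^ (-(1 / 5) : ℝ)))) :=
        card_smoothNumbersUpTo_succ_le (by norm_num) (by norm_num) _ N
    _ ≤ z ^ (1 / 5 : ℝ) *
          Real.exp ((N : ℝ) ^ (1 - 1 / 5 : ℝ) / ((1 - 1 / 5) * (1 - 2 ^ (-(1 / 5) : ℝ)))) := by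
        gcongr
        exact Nat.floor_le hz.le
    _ < z ^ (1 / 5 : ℝ) * Real.exp (Real.log z * (1 / 20)) := by gcongr
    _ = z ^ (1 / 4 : ℝ) := by
        rw [← Real.rpow_def_of_pos hz, ← Real.rpow_add hz]
        norm_num

lemma mem_smoothNumbers_succ_iff_maxPrimeFactor_le {n N : ℕ} (hn : n ≠ 0) (hN : 1 ≤ N) :
    n ∈ (N + 1).smoothNumbers ↔ maxPrimeFactor n ≤ N := by
  simp [Nat.mem_smoothNumbers, maxPrimeFactor, Finset.sup_le_iff, hn, hN]

lemma card_filter_maxPrimeFactor_lt_le (M : ℕ) (y : ℝ) :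
    ((Finset.Icc 1 M).filter fun n : ℕ ↦ (maxPrimeFactor n : ℝ) < y).card ≤
      (Nat.smoothNumbersUpTo M (⌊y⌋₊ + 1)).card := by
  refine Finset.card_le_card fun n hn ↦ ?_
  obtain ⟨hnM, hlt⟩ := Finset.mem_filter.1 hn
  obtain ⟨hn₁, hM⟩ := Finset.mem_Icc.1 hnM
  have hle : maxPrimeFactor n ≤ ⌊y⌋₊ := Nat.le_floor hlt.le
  have hy : 1 ≤ ⌊y⌋₊ := (le_max_left _ _).trans hle
  exact Nat.mem_smoothNumbersUpTo.2
    ⟨hM, (mem_smoothNumbers_succ_iff_maxPrimeFactor_le (by lia) hy).2 hle⟩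

lemma natFloor_pow_four_le (y : ℝ) : (⌊y⌋₊ : ℝ) ^ 4 ≤ y ^ 4 := by
  rcases le_total 0 y with hy | hy
  · gcongr
    exact Nat.floor_le hy
  · rw [Nat.floor_of_nonpos hy, Nat.cast_zero, zero_pow four_ne_zero]
    positivity

theorem statement_13_general {ℓ x z : ℝ} (hℓ : 0 < ℓ) (hx₀ : 0 < x)
    (hx : (600 * ℓ) ^ 5 * Real.log (Real.log x) ^ 4 < Real.log x)
    (hz : x ^ (1 / (3 * ℓ)) ≤ z) :
    (((Finset.Icc 1 ⌊z⌋₊).filter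
        (fun n : ℕ => (maxPrimeFactor n : ℝ) < Real.log x * Real.log (Real.log x))).card : ℝ) <
      z ^ ((1 : ℝ) / 4) := by
  set L := Real.log x
  have hxz : 0 < x ^ (1 / (3 * ℓ)) := Real.rpow_pos_of_pos hx₀ _
  have hL₀ : 0 < L := hx.trans_le' (by positivity)
  have hlogz : L / (3 * ℓ) ≤ Real.log z :=
    calc L / (3 * ℓ) = Real.log (x ^ (1 / (3 * ℓ))) := by rw [Real.log_rpow hx₀]; ring
      _ ≤ Real.log z := Real.log_le_log hxz hz
  have hpow : 200 ^ 5 * (⌊L * Real.log L⌋₊ : ℝ) ^ 4 < Real.log z ^ 5 :=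
    calc 200 ^ 5 * (⌊L * Real.log L⌋₊ : ℝ) ^ 4 ≤ 200 ^ 5 * (L * Real.log L) ^ 4 := by
          rw [mul_le_mul_iff_right₀ (by positivity)]
          exact natFloor_pow_four_le _
      _ = (600 * ℓ) ^ 5 * Real.log L ^ 4 * (L ^ 4 / (3 * ℓ) ^ 5) := by field_simp; ring
      _ < L * (L ^ 4 / (3 * ℓ) ^ 5) := by gcongr
      _ = (L / (3 * ℓ)) ^ 5 := by ring
      _ ≤ Real.log z ^ 5 := by gcongr
  calc _ ≤ ((Nat.smoothNumbersUpTo ⌊z⌋₊ (⌊L * Real.log L⌋₊ + 1)).card : ℝ) :=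
        mod_cast card_filter_maxPrimeFactor_lt_le _ _
    _ < z ^ (1 / 4 : ℝ) := card_smoothNumbersUpTo_lt_rpow_one_fourth (hxz.trans_le hz) hpow

lemma mul_log_pow_four_lt {ℓ L : ℝ} (hℓ : 1 ≤ ℓ) (hL : (84 * ℓ) ^ 28 ≤ L) :
    (600 * ℓ) ^ 5 * Real.log L ^ 4 < L := by
  have hL₀ : 0 < L := hL.trans_lt' (by positivity)
  obtain ⟨b, hb₀, rfl⟩ : ∃ b : ℝ, 0 < b ∧ b ^ 28 = L :=
    ⟨L ^ (1 / 28 : ℝ), by positivity, by rw [← Real.rpow_mul_natCast hL₀.le]; norm_num⟩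
  have hb : 84 * ℓ ≤ b := le_of_pow_le_pow_left₀ (by norm_num) hb₀.le hL
  have hb₁ : 1 < b := by linarith
  have hlog : Real.log (b ^ 28) ≤ b * b := by
    rw [Real.log_pow, Nat.cast_ofNat]
    nlinarith [Real.log_le_self hb₀.le]
  have hlog₀ : 0 ≤ Real.log (b ^ 28) := Real.log_nonneg (one_le_pow₀ hb₁.le)
  have hℓb : 600 * ℓ ≤ b * b := by nlinarith
  calc (600 * ℓ) ^ 5 * Real.log (b ^ 28) ^ 4 ≤ (b * b) ^ 5 * (b * b) ^ 4 := by
        gcongr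
    _ = b ^ 18 := by ring
    _ < b ^ 28 := pow_lt_pow_right₀ hb₁ (by norm_num)

lemma pow_le_rpow_log {ℓ : ℝ} (hℓ : 1 ≤ ℓ) :
    (12 * ℓ) ^ 28 ≤ (12 * Real.exp 1 * ℓ) ^ (28 * Real.log (192 * Real.exp 1 * ℓ)) := by
  have he : 1 ≤ Real.exp 1 := Real.one_le_exp zero_le_one
  have hlog : 1 ≤ Real.log (192 * Real.exp 1 * ℓ) := by
    rw [Real.le_log_iff_exp_le (by positivity)]
    nlinarith
  have hbase : 12 * ℓ ≤ 12 * Real.exp 1 * ℓ := by nlinarith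
  calc (12 * ℓ) ^ 28 ≤ (12 * Real.exp 1 * ℓ) ^ 28 := by gcongr
    _ = (12 * Real.exp 1 * ℓ) ^ (28 : ℝ) := by norm_cast
    _ ≤ _ := Real.rpow_le_rpow_of_exponent_le (by linarith) (by linarith)

lemma pow_le_log_of_exp_le {ℓ x : ℝ} (hℓ : 1 ≤ ℓ)
    (hx : Real.exp (7 ^ 28 * (12 * Real.exp 1 * ℓ) ^
            (28 * Real.log (192 * Real.exp 1 * ℓ))) ≤ x) :
    (84 * ℓ) ^ 28 ≤ Real.log x :=
  calc (84 * ℓ) ^ 28 = 7 ^ 28 * (12 * ℓ) ^ 28 := by rw [← mul_pow]; ring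
    _ ≤ 7 ^ 28 * (12 * Real.exp 1 * ℓ) ^ (28 * Real.log (192 * Real.exp 1 * ℓ)) := by
        gcongr
        exact pow_le_rpow_log hℓ
    _ ≤ Real.log x := (Real.le_log_iff_exp_le ((Real.exp_pos _).trans_le hx)).2 hx

theorem statement_13 (ℓ x z : ℝ) (hℓ : 1 ≤ ℓ)
    (hx : Real.exp (7 ^ 28 * (12 * Real.exp 1 * ℓ) ^
            (28 * Real.log (192 * Real.exp 1 * ℓ))) ≤ x)
    (hz : x ^ (1 / (3 * ℓ)) ≤ z) :
    (((Finset.Icc 1 ⌊z⌋₊).filter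
        (fun n : ℕ => (maxPrimeFactor n : ℝ) < Real.log x * Real.log (Real.log x))).card : ℝ) <
      z ^ ((1 : ℝ) / 4) :=
  statement_13_general (zero_lt_one.trans_le hℓ) ((Real.exp_pos _).trans_le hx)
    (mul_log_pow_four_lt hℓ (pow_le_log_of_exp_le hℓ hx)) hz
end

section
/- Let T ≥ 1 be a real number and f : ℝ → ℝ a locally integrable T-periodic function. Set μ_f := (1/T) ∫_0^T f(t) dt and m_f := max_{0 ≤ c < 1} |∫_0^{cT} (f(t) − μ_f) dt|. Then for all real numbers a, b with 1 ≤ a ≤ b, one has |∫_a^b f(t)/t dt − μ_f log(b/a)| ≤ 2 m_f / a. -/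
/-!
Since `f` is periodic, subtracting its mean leaves a function `g` whose primitive from `0` is
periodic, hence bounded by `m_f`, and `∫ t in a..x, g t` is bounded by `2 * m_f`. The weight `1 / t`
decreases, so its superlevel sets in `(a, b]` are initial segments, up to a null set. The layer cake
formula then writes `∫ t in a..b, g t / t` as an integral over levels in `(0, 1 / a]` of integrals
of `g` over initial segments, each bounded by `2 * m_f`.
-/

open MeasureTheory Set

theorem intervalIntegrable_of_locallyIntegrable {E : Type*} [NormedAddCommGroup E] {g : ℝ → E}
    {μ : Measure ℝ} (hg : LocallyIntegrable g μ) (a b : ℝ) : IntervalIntegrable g μ a b :=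
  (hg.integrableOn_isCompact isCompact_uIcc).intervalIntegrable

variable {E : Type*} [NormedAddCommGroup E] [NormedSpace ℝ E]

section LayerCake

variable {α : Type*} [MeasurableSpace α] {ν : Measure α} [SFinite ν] [CompleteSpace E]
  {u : α → ℝ} {g : α → E} {K M : ℝ}

theorem integral_smul_eq_integral_setIntegral_lt (hg : Integrable g ν) (hu : AEMeasurable u ν)
    (hu0 : ∀ᵐ x ∂ν, 0 ≤ u x) (huK : ∀ᵐ x ∂ν, u x ≤ K) :
    ∫ x, u x • g x ∂ν = ∫ s in Ioc 0 K, ∫ x in {x | s < u x}, g x ∂ν := by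
  let layer (x : α) (s : ℝ) : E := {p : α × ℝ | p.2 < u p.1}.indicator (fun p => g p.1) (x, s)
  have layer_integrable :
      Integrable (Function.uncurry layer) (ν.prod (volume.restrict (Ioc 0 K))) :=
    (hg.comp_fst _).indicator₀ (nullMeasurableSet_lt measurable_snd.aemeasurable hu.comp_fst)
  have integral_level (s : ℝ) : ∫ x, layer x s ∂ν = ∫ x in {x | s < u x}, g x ∂ν :=
    integral_indicator₀ (nullMeasurableSet_lt aemeasurable_const hu)
  have integral_fiber (x : α) (hx0 : 0 ≤ u x) (hxK : u x ≤ K) :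
      ∫ s in Ioc 0 K, layer x s = u x • g x := by
    have hfiber : Ioc 0 K ∩ Iio (u x) = Ioo 0 (u x) := by
      ext s
      simp only [mem_inter_iff, mem_Ioc, mem_Iio, mem_Ioo]
      grind
    calc ∫ s in Ioc 0 K, layer x s = ∫ s in Ioc 0 K, (Iio (u x)).indicator (fun _ => g x) s := rfl
      _ = ∫ _ in Ioo 0 (u x), g x := by rw [setIntegral_indicator measurableSet_Iio, hfiber]
      _ = u x • g x := by simp [hx0]
  calc ∫ x, u x • g x ∂ν = ∫ x, (∫ s in Ioc 0 K, layer x s) ∂ν := by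
        refine integral_congr_ae ?_
        filter_upwards [hu0, huK] with x hx0 hxK using (integral_fiber x hx0 hxK).symm
    _ = ∫ s in Ioc 0 K, ∫ x, layer x s ∂ν := integral_integral_swap layer_integrable
    _ = ∫ s in Ioc 0 K, ∫ x in {x | s < u x}, g x ∂ν := by simp only [integral_level]

theorem norm_integral_smul_le_of_norm_setIntegral_lt_le (hg : Integrable g ν)
    (hu : AEMeasurable u ν) (hu0 : ∀ᵐ x ∂ν, 0 ≤ u x) (huK : ∀ᵐ x ∂ν, u x ≤ K) (hK : 0 ≤ K)
    (hM : ∀ s ∈ Ioc 0 K, ‖∫ x in {x | s < u x}, g x ∂ν‖ ≤ M) :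
    ‖∫ x, u x • g x ∂ν‖ ≤ K * M := by
  rw [integral_smul_eq_integral_setIntegral_lt hg hu hu0 huK]
  calc _ ≤ M * volume.real (Ioc 0 K) :=
        norm_setIntegral_le_of_norm_le_const measure_Ioc_lt_top hM
    _ = K * M := by rw [Real.volume_real_Ioc_of_le hK, sub_zero, mul_comm]

end LayerCake

theorem exists_setOf_lt_inter_Ioc_ae_eq_Ioc_of_antitoneOn {α β : Type*}
    [ConditionallyCompleteLinearOrder α] [MeasurableSpace α] [Preorder β] {μ : Measure α}
    [NullSingletonClass μ] {u : α → β} {a b : α} (hab : a ≤ b) (hu : AntitoneOn u (Ioc a b))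
    (s : β) : ∃ c ∈ Icc a b, ({x | s < u x} ∩ Ioc a b : Set α) =ᵐ[μ] Ioc a c := by
  set A : Set α := {x | s < u x} ∩ Ioc a b
  set c : α := sSup (insert a A)
  have hAb : ∀ x ∈ insert a A, x ≤ b := by
    rintro x (rfl | hx)
    exacts [hab, hx.2.2]
  have hle : ∀ x ∈ insert a A, x ≤ c := fun x hx => le_csSup ⟨b, hAb⟩ hx
  have hA_sub : A ⊆ Ioc a c := fun x hx => ⟨hx.2.1, hle x (mem_insert_of_mem a hx)⟩
  have hsub_A : Ioo a c ⊆ A := by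
    rintro x ⟨hax, hxc⟩
    obtain ⟨y, rfl | hy, hxy⟩ := exists_lt_of_lt_csSup (insert_nonempty a A) hxc
    · exact absurd hax hxy.not_gt
    · have hx : x ∈ Ioc a b := ⟨hax, hxy.le.trans hy.2.2⟩
      exact ⟨hy.1.trans_le (hu hx hy.2 hxy.le), hx⟩
  exact ⟨c, ⟨hle a (mem_insert a A), csSup_le (insert_nonempty a A) hAb⟩,
    hA_sub.eventuallyLE.antisymm (Ioo_ae_eq_Ioc.symm.le.trans hsub_A.eventuallyLE)⟩

theorem norm_intervalIntegral_smul_le_of_antitoneOn [CompleteSpace E] {μ : Measure ℝ}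
    [SFinite μ] [NullSingletonClass μ] {u : ℝ → ℝ} {g : ℝ → E} {a b M : ℝ} (hab : a ≤ b)
    (hu : AntitoneOn u (Icc a b)) (hub : 0 ≤ u b) (hg : IntervalIntegrable g μ a b)
    (hM : ∀ x ∈ Icc a b, ‖∫ t in a..x, g t ∂μ‖ ≤ M) :
    ‖∫ t in a..b, u t • g t ∂μ‖ ≤ u a * M := by
  have ha : a ∈ Icc a b := left_mem_Icc.2 hab
  have hb : b ∈ Icc a b := right_mem_Icc.2 hab
  have hu' : AntitoneOn u (Ioc a b) := hu.mono Ioc_subset_Icc_self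
  have hmeas : AEMeasurable u (μ.restrict (Ioc a b)) :=
    aemeasurable_restrict_of_antitoneOn measurableSet_Ioc hu'
  have hrange : ∀ᵐ x ∂μ.restrict (Ioc a b), 0 ≤ u x ∧ u x ≤ u a := by
    filter_upwards [ae_restrict_mem measurableSet_Ioc] with x hx
    have hx' := Ioc_subset_Icc_self hx
    exact ⟨hub.trans (hu hx' hb hx.2), hu ha hx' hx.1.le⟩
  rw [intervalIntegral.integral_of_le hab]
  refine norm_integral_smul_le_of_norm_setIntegral_lt_le hg.1 hmeas (hrange.mono fun _ h => h.1)
    (hrange.mono fun _ h => h.2) (hub.trans (hu ha hb hab)) fun s _ => ?_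
  obtain ⟨c, hc, hsc⟩ := exists_setOf_lt_inter_Ioc_ae_eq_Ioc_of_antitoneOn (μ := μ) hab hu' s
  rw [Measure.restrict_restrict₀ (nullMeasurableSet_lt aemeasurable_const hmeas),
    setIntegral_congr_set hsc, ← intervalIntegral.integral_of_le hc.1]
  exact hM c hc

section Periodic

variable {f g : ℝ → E} {T : ℝ}

theorem periodic_intervalIntegral_of_integral_eq_zero (hg : LocallyIntegrable g)
    (hper : Function.Periodic g T) (hzero : ∫ t in (0 : ℝ)..T, g t = 0) :
    Function.Periodic (fun x => ∫ t in (0 : ℝ)..x, g t) T := by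
  intro x
  have hint := intervalIntegrable_of_locallyIntegrable hg
  calc ∫ t in (0 : ℝ)..(x + T), g t
      = (∫ t in (0 : ℝ)..x, g t) + ∫ t in x..(x + T), g t :=
        (intervalIntegral.integral_add_adjacent_intervals (hint 0 x) (hint x (x + T))).symm
    _ = ∫ t in (0 : ℝ)..x, g t := by
        rw [hper.intervalIntegral_add_eq x 0, zero_add, hzero, add_zero]

theorem intervalIntegral_sub_intervalAverage [CompleteSpace E] {a b : ℝ}
    (hf : IntervalIntegrable f volume a b) : ∫ t in a..b, (f t - ⨍ s in a..b, f s) = 0 := by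
  rcases eq_or_ne a b with rfl | hab
  · exact intervalIntegral.integral_same
  · rw [intervalIntegral.integral_sub hf intervalIntegrable_const, intervalIntegral.integral_const,
      interval_average_eq, smul_inv_smul₀ (sub_ne_zero.2 hab.symm), sub_self]

/-- The constant `m_f` attached to a function `f` of period `T`: the largest deviation from `0`,
over one period, of the primitive of `f` minus its mean. The mean `μ_f` is the interval average
`⨍ s in 0..T, f s`. -/
noncomputable def maxPrimitiveDeviation (f : ℝ → E) (T : ℝ) : ℝ :=
  sSup {y : ℝ | ∃ c ∈ Ico (0 : ℝ) 1,
    y = ‖∫ t in (0 : ℝ)..(c * T), (f t - ⨍ s in (0 : ℝ)..T, f s)‖}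

theorem norm_intervalIntegral_sub_average_le_maxPrimitiveDeviation [CompleteSpace E] (hT : T ≠ 0)
    (hf : LocallyIntegrable f) (hper : Function.Periodic f T) (x : ℝ) :
    ‖∫ t in (0 : ℝ)..x, (f t - ⨍ s in (0 : ℝ)..T, f s)‖ ≤ maxPrimitiveDeviation f T := by
  set F : ℝ → E := fun x => ∫ t in (0 : ℝ)..x, (f t - ⨍ s in (0 : ℝ)..T, f s)
  have hg : LocallyIntegrable fun t => f t - ⨍ s in (0 : ℝ)..T, f s :=
    hf.sub (locallyIntegrable_const _)
  have hFper : Function.Periodic F T :=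
    periodic_intervalIntegral_of_integral_eq_zero hg (hper.sub fun _ => rfl) <|
      intervalIntegral_sub_intervalAverage (intervalIntegrable_of_locallyIntegrable hf 0 T)
  have hFcont : Continuous F :=
    intervalIntegral.continuous_primitive (intervalIntegrable_of_locallyIntegrable hg) 0
  obtain ⟨C, hC⟩ := (hFper.isBounded_of_continuous hT hFcont).exists_norm_le
  have hbdd : BddAbove {y : ℝ | ∃ c ∈ Ico (0 : ℝ) 1, y = ‖F (c * T)‖} := by
    refine ⟨C, ?_⟩
    rintro _ ⟨c, -, rfl⟩
    exact hC _ (mem_range_self _)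
  have hreduce : F x = F (Int.fract (x / T) * T) := by
    conv_lhs => rw [← Int.fract_div_mul_self_add_zsmul_eq T x hT]
    exact hFper.zsmul ⌊x / T⌋ _
  exact le_csSup hbdd
    ⟨Int.fract (x / T), ⟨Int.fract_nonneg _, Int.fract_lt_one _⟩, congrArg norm hreduce⟩

end Periodic

theorem intervalIntegral_inv_smul_sub_const [CompleteSpace E] {f : ℝ → E} {a b : ℝ} (ha : 0 < a)
    (hb : 0 < b) (hf : IntervalIntegrable f volume a b) (c : E) :
    ∫ t in a..b, t⁻¹ • (f t - c) = (∫ t in a..b, t⁻¹ • f t) - Real.log (b / a) • c := by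
  have hinv : ContinuousOn (fun t : ℝ => t⁻¹) (uIcc a b) :=
    continuousOn_id.inv₀ fun t ht => ((lt_min ha hb).trans_le ht.1).ne'
  simp only [smul_sub]
  rw [intervalIntegral.integral_sub (hf.continuousOn_smul hinv)
    (intervalIntegrable_const.continuousOn_smul hinv), intervalIntegral.integral_smul_const,
    integral_inv_of_pos ha hb]

theorem statement_17_general [CompleteSpace E] {T : ℝ} (hT : T ≠ 0) {f : ℝ → E}
    (hf : LocallyIntegrable f) (hper : Function.Periodic f T) {a b : ℝ} (ha : 0 < a)
    (hab : a ≤ b) :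
    ‖(∫ t in a..b, t⁻¹ • f t) - Real.log (b / a) • ⨍ s in (0 : ℝ)..T, f s‖ ≤
      2 * maxPrimitiveDeviation f T / a := by
  set g : ℝ → E := fun t => f t - ⨍ s in (0 : ℝ)..T, f s
  have hg : ∀ x y, IntervalIntegrable g volume x y :=
    intervalIntegrable_of_locallyIntegrable (hf.sub (locallyIntegrable_const _))
  have hprimitive := norm_intervalIntegral_sub_average_le_maxPrimitiveDeviation hT hf hper
  have hoscillation (x : ℝ) : ‖∫ t in a..x, g t‖ ≤ 2 * maxPrimitiveDeviation f T := by
    rw [← intervalIntegral.integral_interval_sub_left (hg 0 x) (hg 0 a), two_mul]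
    exact norm_sub_le_of_le (hprimitive x) (hprimitive a)
  have hanti : AntitoneOn (fun t : ℝ => t⁻¹) (Icc a b) := fun x hx _ _ hxy =>
    inv_anti₀ (ha.trans_le hx.1) hxy
  have hb : 0 < b := ha.trans_le hab
  rw [← intervalIntegral_inv_smul_sub_const ha hb (intervalIntegrable_of_locallyIntegrable hf a b),
    div_eq_inv_mul]
  exact norm_intervalIntegral_smul_le_of_antitoneOn hab hanti (inv_nonneg.2 hb.le) (hg a b)
    fun x _ => hoscillation x

theorem statement_17 (T : ℝ) (hT : 1 ≤ T) (f : ℝ → ℝ)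
    (hloc : MeasureTheory.LocallyIntegrable f MeasureTheory.volume)
    (hper : ∀ t : ℝ, f (t + T) = f t)
    (μf mf : ℝ)
    (hμ : μf = (1 / T) * ∫ t in (0 : ℝ)..T, f t)
    (hm : mf = sSup {y : ℝ | ∃ c ∈ Set.Ico (0 : ℝ) 1,
            y = |∫ t in (0 : ℝ)..(c * T), (f t - μf)|})
    (a b : ℝ) (ha : 1 ≤ a) (hab : a ≤ b) :
    |(∫ t in a..b, f t / t) - μf * Real.log (b / a)| ≤ 2 * mf / a := by
  obtain rfl : μf = ⨍ s in (0 : ℝ)..T, f s := by simp [hμ, interval_average_eq]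
  simpa [hm, maxPrimitiveDeviation, div_eq_inv_mul, mul_comm] using
    statement_17_general (one_pos.trans_le hT).ne' hloc hper (one_pos.trans_le ha) hab
end

section
/- For all real c ∈ [0,1], one has |∫_0^{2cπ} ( |cos(t/2)| − 2/π ) dt| ≤ (2/π)( √(π² − 4) − 2 arccos(2/π) ). -/
/-!
Substituting `t = 2u` turns the integral into twice the discrepancy
`∫ u in 0..x, (|cos u| - 2 / π)` at `x = c * π`. As `2 / π` is the mean of `|cos|`, the discrepancy
is `π`-periodic in `x`, so only `|x| ≤ π / 2` matters, where it equals `sin x - 2 / π * x`. This is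
odd and, by Jordan's inequality, nonnegative for `x ≥ 0`; the concavity of `sin` bounds it by its
value at the point where the tangent of `sin` has slope `2 / π`.
-/

open Real Set Function MeasureTheory intervalIntegral

theorem concaveOn_le_add_mul_sub_of_hasDerivWithinAt {S : Set ℝ} {f : ℝ → ℝ} {f' a x : ℝ}
    (hf : ConcaveOn ℝ S f) (ha : a ∈ S) (hx : x ∈ S) (hf' : HasDerivWithinAt f f' S a) :
    f x ≤ f a + f' * (x - a) := by
  rcases lt_trichotomy x a with hxa | rfl | hax
  · have hslope : f' ≤ slope f x a := hf.le_slope_of_hasDerivWithinAt hx ha hxa hf'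
    rw [slope_def_field, le_div_iff₀ (sub_pos.2 hxa)] at hslope
    linarith
  · simp
  · have hslope : slope f a x ≤ f' := hf.slope_le_of_hasDerivWithinAt ha hx hax hf'
    rw [slope_def_field, div_le_iff₀ (sub_pos.2 hax)] at hslope
    linarith

theorem sin_sub_mul_le_sqrt_sub_mul_arccos {m x : ℝ} (hm : m ∈ Icc (-1) 1) (hx : x ∈ Icc 0 π) :
    sin x - m * x ≤ √(1 - m ^ 2) - m * arccos m := by
  have htangent := concaveOn_le_add_mul_sub_of_hasDerivWithinAt strictConcaveOn_sin_Icc.concaveOn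
    ⟨arccos_nonneg m, arccos_le_pi m⟩ hx (hasDerivAt_sin (arccos m)).hasDerivWithinAt
  rw [sin_arccos, cos_arccos hm.1 hm.2] at htangent
  linarith

theorem abs_sin_sub_mul_le_sqrt_sub_mul_arccos {m x : ℝ} (hm : m ∈ Icc (-1) (2 / π))
    (hx : |x| ≤ π / 2) : |sin x - m * x| ≤ √(1 - m ^ 2) - m * arccos m := by
  wlog hx0 : 0 ≤ x generalizing x
  · have hodd : sin x - m * x = -(sin (-x) - m * -x) := by rw [sin_neg]; ring
    rw [hodd, abs_neg]
    exact this (by rwa [abs_neg]) (by linarith)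
  rw [abs_of_nonneg hx0] at hx
  have hm1 : m ≤ 1 := hm.2.trans ((div_le_one pi_pos).2 two_le_pi)
  have hnonneg : 0 ≤ sin x - m * x :=
    sub_nonneg.2 ((mul_le_mul_of_nonneg_right hm.2 hx0).trans (mul_le_sin hx0 hx))
  rw [abs_of_nonneg hnonneg]
  exact sin_sub_mul_le_sqrt_sub_mul_arccos ⟨hm.1, hm1⟩ ⟨hx0, by linarith [pi_pos]⟩

theorem periodic_integral_of_integral_eq_zero {E : Type*} [NormedAddCommGroup E] [NormedSpace ℝ E]
    {f : ℝ → E} {T : ℝ} (a : ℝ) (hf : Periodic f T)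
    (hint : ∀ t₁ t₂, IntervalIntegrable f volume t₁ t₂) (hzero : ∫ t in a..a + T, f t = 0) :
    Periodic (fun x => ∫ t in a..x, f t) T := fun x => by
  simp only [hf.intervalIntegral_add_eq_add a x hint, hzero, add_zero]

theorem integral_abs_cos_sub_const {m a b : ℝ} (ha : a ∈ Icc (-(π / 2)) (π / 2))
    (hb : b ∈ Icc (-(π / 2)) (π / 2)) :
    ∫ t in a..b, (|cos t| - m) = sin b - sin a - m * (b - a) := by
  have hcongr : EqOn (fun t => |cos t| - m) (fun t => cos t - m) (uIcc a b) := fun t ht => by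
    simp only [abs_of_nonneg (cos_nonneg_of_mem_Icc (uIcc_subset_Icc ha hb ht))]
  rw [integral_congr hcongr, integral_sub intervalIntegrable_cos intervalIntegrable_const,
    integral_cos, intervalIntegral.integral_const, smul_eq_mul, mul_comm]

theorem periodic_integral_abs_cos_sub_two_div_pi :
    Periodic (fun x => ∫ t in (0 : ℝ)..x, (|cos t| - 2 / π)) π := by
  have hperiodic : Periodic (fun t => |cos t| - 2 / π) π := fun t => by
    simp only [cos_add_pi, abs_neg]
  have hcont : Continuous (fun t => |cos t| - 2 / π) := by fun_prop
  refine periodic_integral_of_integral_eq_zero 0 hperiodic hcont.intervalIntegrable ?_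
  have hπ : -(π / 2) ≤ π / 2 := by linarith [pi_pos]
  rw [hperiodic.intervalIntegral_add_eq 0 (-(π / 2)), show -(π / 2) + π = π / 2 by ring,
    integral_abs_cos_sub_const ⟨le_rfl, hπ⟩ ⟨hπ, le_rfl⟩, sin_neg, sin_pi_div_two]
  field_simp
  ring

theorem abs_integral_abs_cos_sub_two_div_pi_le (x : ℝ) :
    |∫ t in (0 : ℝ)..x, (|cos t| - 2 / π)| ≤ √(1 - (2 / π) ^ 2) - 2 / π * arccos (2 / π) := by
  obtain ⟨y, ⟨hy₁, hy₂⟩, hxy⟩ :=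
    periodic_integral_abs_cos_sub_two_div_pi.exists_mem_Ico pi_pos x (-(π / 2))
  have hy : y ∈ Icc (-(π / 2)) (π / 2) := ⟨hy₁, by linarith⟩
  have h0 : (0 : ℝ) ∈ Icc (-(π / 2)) (π / 2) := ⟨by linarith [pi_pos], by positivity⟩
  have hm : 2 / π ∈ Icc (-1) (2 / π) := ⟨by linarith [show 0 < 2 / π by positivity], le_rfl⟩
  calc |∫ t in (0 : ℝ)..x, (|cos t| - 2 / π)|
      = |∫ t in (0 : ℝ)..y, (|cos t| - 2 / π)| := congrArg abs hxy
    _ = |sin y - 2 / π * y| := by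
      rw [integral_abs_cos_sub_const h0 hy, sin_zero, sub_zero, sub_zero]
    _ ≤ √(1 - (2 / π) ^ 2) - 2 / π * arccos (2 / π) :=
      abs_sin_sub_mul_le_sqrt_sub_mul_arccos hm (abs_le.2 hy)

theorem sqrt_one_sub_div_sq (a : ℝ) {b : ℝ} (hb : 0 < b) :
    √(1 - (a / b) ^ 2) = √(b ^ 2 - a ^ 2) / b := by
  rw [div_pow, one_sub_div (by positivity), sqrt_div' _ (by positivity), sqrt_sq hb.le]

theorem statement_18_general (c : ℝ) :
    |∫ t in (0 : ℝ)..(2 * c * π), (|cos (t / 2)| - 2 / π)| ≤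
      2 / π * (√(π ^ 2 - 4) - 2 * arccos (2 / π)) := by
  have hsubst : ∫ t in (0 : ℝ)..(2 * c * π), (|cos (t / 2)| - 2 / π) =
      2 * ∫ t in (0 : ℝ)..(c * π), (|cos t| - 2 / π) := by
    rw [integral_comp_div (fun t => |cos t| - 2 / π) two_ne_zero, zero_div, mul_assoc,
      mul_div_cancel_left₀ _ two_ne_zero, smul_eq_mul]
  calc |∫ t in (0 : ℝ)..(2 * c * π), (|cos (t / 2)| - 2 / π)|
      = 2 * |∫ t in (0 : ℝ)..(c * π), (|cos t| - 2 / π)| := by rw [hsubst, abs_mul, abs_two]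
    _ ≤ 2 * (√(1 - (2 / π) ^ 2) - 2 / π * arccos (2 / π)) := by
      gcongr
      exact abs_integral_abs_cos_sub_two_div_pi_le (c * π)
    _ = 2 / π * (√(π ^ 2 - 4) - 2 * arccos (2 / π)) := by
      rw [sqrt_one_sub_div_sq 2 pi_pos, show (2 : ℝ) ^ 2 = 4 by norm_num]
      ring

theorem statement_18 (c : ℝ) (hc : c ∈ Set.Icc (0 : ℝ) 1) :
    |∫ t in (0 : ℝ)..(2 * c * Real.pi), (|Real.cos (t / 2)| - 2 / Real.pi)| ≤
      2 / Real.pi * (Real.sqrt (Real.pi ^ 2 - 4) - 2 * Real.arccos (2 / Real.pi)) :=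
  statement_18_general c
end
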